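/- arXiv:2310.18960 — 2 statements merged into one kernel-verified Lean document; each statement's English description precedes it below -/
import Mathlib

section
/- Let P = x + [0,a] + [0,b] + [0,c] ⊂ ℝ³ be a parallelepiped, where a, b, c ∈ ℝ³ are linearly independent, let z ∈ ℝ³ be nonzero, and let t⁻ = min{z·y : y ∈ P}, t⁺ = max{z·y : y ∈ P}. Then (1/(t⁺−t⁻)) · ∫_{t⁻}^{t⁺} ( (number of vertices of P ∩ {y : z·y ≤ t}) + (number of vertices of P ∩ {y : z·y ≥ t}) )/2 dt = 8, i.e., a parallelepiped is a critical polytope: the expected number of vertices of the two pieces of a uniform random cut orthogonal to any direction equals its number of vertices. -/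
open scoped Pointwise BigOperators

noncomputable section

/-- Scalar product on `ℝ^d`. -/
def dotp {d : ℕ} (z x : Fin d → ℝ) : ℝ := ∑ i, z i * x i

/-- Number of vertices (extreme points) of a set. -/
def nVert {d : ℕ} (S : Set (Fin d → ℝ)) : ℕ := (Set.extremePoints ℝ S).ncard

/-- `t⁻ = min {z·x : x ∈ P}`. -/
def tMin {d : ℕ} (P : Set (Fin d → ℝ)) (z : Fin d → ℝ) : ℝ := sInf (dotp z '' P)

/-- `t⁺ = max {z·x : x ∈ P}`. -/
def tMax {d : ℕ} (P : Set (Fin d → ℝ)) (z : Fin d → ℝ) : ℝ := sSup (dotp z '' P)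

/-- `A(P,z)`: the average number of vertices of the sections `P ∩ {x : z·x = t}`
over `t ∈ [t⁻, t⁺]`. -/
def avgVert {d : ℕ} (P : Set (Fin d → ℝ)) (z : Fin d → ℝ) : ℝ :=
  (tMax P z - tMin P z)⁻¹ *
    ∫ t in tMin P z..tMax P z, ((nVert (P ∩ {x | dotp z x = t}) : ℝ))

/-- A convex polytope: the convex hull of a finite point set. -/
def IsPolytope {d : ℕ} (P : Set (Fin d → ℝ)) : Prop :=
  ∃ s : Finset (Fin d → ℝ), P = convexHull ℝ (s : Set (Fin d → ℝ))

/-- The vectors are nonzero and pairwise linearly independent. -/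
def PairwiseIndep {d n : ℕ} (a : Fin n → (Fin d → ℝ)) : Prop :=
  (∀ i, a i ≠ 0) ∧ ∀ i j, i ≠ j → ∀ c : ℝ, a j ≠ c • a i

/-- A zonotope: a translate of a Minkowski sum of segments `[0, aᵢ]` with pairwise
linearly independent nonzero generators. -/
def IsZonotope {d : ℕ} (P : Set (Fin d → ℝ)) : Prop :=
  ∃ (n : ℕ) (a : Fin n → (Fin d → ℝ)) (x : Fin d → ℝ),
    PairwiseIndep a ∧ P = {x} + ∑ i, segment ℝ 0 (a i)

/-- Central symmetry: there is `c` with `2c - P = P`. -/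
def CentSymm {d : ℕ} (P : Set (Fin d → ℝ)) : Prop :=
  ∃ c : Fin d → ℝ, (fun y => (2 : ℝ) • c - y) '' P = P

/-- An edge of the hypergraph `ℱ` on the generator set `V`: a subset `W ⊆ V` spanning
a 2-dimensional subspace, maximal with this property. -/
def IsHEdge (V W : Finset (Fin 3 → ℝ)) : Prop :=
  W ⊆ V ∧ Module.finrank ℝ (Submodule.span ℝ (W : Set (Fin 3 → ℝ))) = 2 ∧
    ∀ v ∈ V, v ∉ W →
      Module.finrank ℝ (Submodule.span ℝ (insert v (W : Set (Fin 3 → ℝ)))) = 3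

/-- The degree of `v` in the hypergraph `ℱ` on `V`: the number of edges containing `v`. -/
def degF (V : Finset (Fin 3 → ℝ)) (v : Fin 3 → ℝ) : ℕ :=
  {W : Finset (Fin 3 → ℝ) | IsHEdge V W ∧ v ∈ W}.ncard

/-- The set of edges of the polytope `P` that are parallel to `v`: one-dimensional
exposed faces `[u,w]` of `P` with `w - u` a nonzero multiple of `v`. -/
def edgesParallel {d : ℕ} (P : Set (Fin d → ℝ)) (v : Fin d → ℝ) : Set (Set (Fin d → ℝ)) :=
  {e | ∃ u w : Fin d → ℝ, u ≠ w ∧ e = segment ℝ u w ∧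
    (∃ y : Fin d → ℝ, y ≠ 0 ∧ e = {x ∈ P | ∀ p ∈ P, dotp y p ≤ dotp y x}) ∧
    ∃ c : ℝ, c ≠ 0 ∧ w - u = c • v}

def vt {n : ℕ} (e : Fin n → Bool) : Fin n → ℝ := fun i => if e i then 1 else 0

lemma vt_cases {n : ℕ} (e : Fin n → Bool) (i : Fin n) : vt e i = 0 ∨ vt e i = 1 := by
  unfold vt; split_ifs <;> simp

lemma vt_inj {n : ℕ} : Function.Injective (vt (n := n)) := by
  intro e f h
  funext i
  have := congrFun h i
  unfold vt at this
  cases he : e i <;> cases hf : f i <;> simp [he, hf] at this ⊢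

lemma exists_vt {n : ℕ} (u : Fin n → ℝ) (h : ∀ i, u i = 0 ∨ u i = 1) : ∃ e, u = vt e := by
  classical
  refine ⟨fun i => decide (u i = 1), ?_⟩
  funext i
  unfold vt
  rcases h i with h | h <;> simp [h]

def half (w : Fin 3 → ℝ) (s : ℝ) : Set (Fin 3 → ℝ) :=
  {u | (∀ i, 0 ≤ u i ∧ u i ≤ 1) ∧ dotp w u ≤ s}

def Vset (w : Fin 3 → ℝ) (s : ℝ) : Set (Fin 3 → ℝ) :=
  vt '' {e | dotp w (vt e) ≤ s}

def Eset (w : Fin 3 → ℝ) (s : ℝ) : Set (Fin 3 → ℝ) :=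
  {u | ∃ i, (∀ j, j ≠ i → u j = 0 ∨ u j = 1) ∧ 0 < u i ∧ u i < 1 ∧ w i ≠ 0 ∧ dotp w u = s}

lemma dotp_comb (w x y : Fin 3 → ℝ) (a b : ℝ) :
    dotp w (a • x + b • y) = a * dotp w x + b * dotp w y := by
  simp only [dotp, Fin.sum_univ_three, Pi.add_apply, Pi.smul_apply, smul_eq_mul]; ring

lemma key01 {a b x y r : ℝ} (ha : 0 < a) (hb : 0 < b) (hab : a + b = 1)
    (hx : 0 ≤ x ∧ x ≤ 1) (hy : 0 ≤ y ∧ y ≤ 1) (h : a * x + b * y = r) (hr : r = 0 ∨ r = 1) :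
    x = r := by
  obtain rfl : b = 1 - a := by linarith
  rcases hr with rfl | rfl
  · nlinarith [mul_nonneg ha.le hx.1, mul_nonneg hb.le hy.1]
  · nlinarith [mul_nonneg ha.le (sub_nonneg.2 hx.2), mul_nonneg hb.le (sub_nonneg.2 hy.2)]

lemma ext_dir {w : Fin 3 → ℝ} {s : ℝ} {u : Fin 3 → ℝ}
    (hu : u ∈ Set.extremePoints ℝ (half w s)) (D : Fin 3 → ℝ)
    (hD : ∀ k, D k = 0 ∨ (u k ≠ 0 ∧ u k ≠ 1)) (hw : dotp w D = 0 ∨ dotp w u < s) : D = 0 := by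
  rw [mem_extremePoints] at hu
  obtain ⟨⟨hc, hs⟩, hext⟩ := hu
  have hlin : ∀ ε : ℝ, dotp w (u + ε • D) = dotp w u + ε * dotp w D := by
    intro ε
    have := dotp_comb w u D 1 ε
    simpa using this
  have h1 : ∀ᶠ ε in nhds (0:ℝ), u + ε • D ∈ half w s := by
    have hA : ∀ᶠ ε in nhds (0:ℝ), ∀ k, 0 ≤ (u + ε • D) k ∧ (u + ε • D) k ≤ 1 := by
      rw [Filter.eventually_all]
      intro k
      rcases hD k with h | ⟨h0, h1⟩
      · exact Filter.Eventually.of_forall fun ε => by simpa [h] using hc k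
      · have l0 : 0 < u k := lt_of_le_of_ne (hc k).1 (Ne.symm h0)
        have l1 : u k < 1 := lt_of_le_of_ne (hc k).2 h1
        have hcont : Filter.Tendsto (fun ε : ℝ => (u + ε • D) k) (nhds 0) (nhds (u k)) := by
          have : Continuous (fun ε : ℝ => (u + ε • D) k) := by
            simp only [Pi.add_apply, Pi.smul_apply, smul_eq_mul]; fun_prop
          simpa using this.tendsto 0
        filter_upwards [hcont.eventually (Ioo_mem_nhds l0 l1)] with ε hε
        exact ⟨hε.1.le, hε.2.le⟩
    have hB : ∀ᶠ ε in nhds (0:ℝ), dotp w (u + ε • D) ≤ s := by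
      simp only [hlin]
      rcases hw with h | h
      · exact Filter.Eventually.of_forall fun ε => by simpa [h] using hs
      · have hcont : Filter.Tendsto (fun ε : ℝ => dotp w u + ε * dotp w D) (nhds 0)
            (nhds (dotp w u)) := by
          have : Continuous (fun ε : ℝ => dotp w u + ε * dotp w D) := by fun_prop
          simpa using this.tendsto 0
        filter_upwards [hcont.eventually (Iio_mem_nhds h)] with ε hε
        exact le_of_lt hε
    filter_upwards [hA, hB] with ε h h' using ⟨h, h'⟩
  have h2 : ∀ᶠ ε in nhds (0:ℝ), u + (-ε) • D ∈ half w s := by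
    have : Filter.Tendsto (fun ε : ℝ => -ε) (nhds 0) (nhds 0) := by
      simpa using (continuous_neg (G := ℝ)).tendsto 0
    exact this.eventually h1
  have h3 : ∀ᶠ ε in nhdsWithin (0:ℝ) (Set.Ioi 0),
      (u + ε • D ∈ half w s ∧ u + (-ε) • D ∈ half w s) ∧ 0 < ε :=
    ((h1.and h2).filter_mono nhdsWithin_le_nhds).and self_mem_nhdsWithin
  obtain ⟨ε, ⟨hp, hm⟩, hpos⟩ := h3.exists
  have := (hext _ hp _ hm ⟨1/2, 1/2, by norm_num, by norm_num, by norm_num, by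
    ext k; simp; ring⟩).1
  funext k
  have := congrFun this k
  simpa [hpos.ne'] using this

lemma ext_char (w : Fin 3 → ℝ) (s : ℝ) :
    Set.extremePoints ℝ (half w s) = Vset w s ∪ Eset w s := by
  ext u
  constructor
  · intro hu
    have hu' := hu.1
    by_cases hall : ∀ i, u i = 0 ∨ u i = 1
    · obtain ⟨e, rfl⟩ := exists_vt u hall
      exact Or.inl ⟨e, hu'.2, rfl⟩
    · push Not at hall
      have frac : ∀ i, u i ≠ 0 ∧ u i ≠ 1 → w i ≠ 0 ∧ dotp w u = s := by
        intro i hi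
        by_contra hcon
        have := ext_dir hu (Pi.single i 1) (by
          intro k
          by_cases hk : k = i
          · subst hk; exact Or.inr hi
          · left; simp [hk]) (by
          by_cases hwi : w i = 0
          · left; simp [dotp, Pi.single_apply, hwi]
          · right; exact lt_of_le_of_ne hu'.2 (fun h => hcon ⟨hwi, h⟩))
        have := congrFun this i
        simp at this
      obtain ⟨i, hi⟩ := hall
      refine Or.inr ⟨i, ?_, lt_of_le_of_ne (hu'.1 i).1 (Ne.symm hi.1),
        lt_of_le_of_ne (hu'.1 i).2 hi.2, (frac i hi).1, (frac i hi).2⟩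
      intro j hj
      by_contra hcon
      push Not at hcon
      have := ext_dir hu (Pi.single j (w i) - Pi.single i (w j)) (by
          intro k
          by_cases hk : k = i
          · subst hk; exact Or.inr hi
          · by_cases hk' : k = j
            · subst hk'; exact Or.inr hcon
            · left; simp [hk, hk']) (by
          left; simp [dotp, Pi.single_apply, mul_sub, Finset.sum_sub_distrib]; ring)
      have := congrFun this j
      simp [hj] at this
      exact (frac i hi).1 this
  · rintro (⟨e, he, rfl⟩ | ⟨i, hj, h0, h1, hwi, hs⟩)
    · rw [mem_extremePoints_iff_left]
      refine ⟨⟨fun i => by rcases vt_cases e i with h | h <;> simp [h], he⟩, ?_⟩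
      rintro x hx y hy ⟨a, b, ha, hb, hab, h⟩
      funext k
      exact key01 ha hb hab (hx.1 k) (hy.1 k) (congrFun h k) (vt_cases e k)
    · rw [mem_extremePoints_iff_left]
      refine ⟨⟨fun j => ?_, hs.le⟩, ?_⟩
      · by_cases h : j = i
        · subst h; exact ⟨h0.le, h1.le⟩
        · rcases hj j h with h | h <;> simp [h]
      rintro x hx y hy ⟨a, b, ha, hb, hab, h⟩
      have hk : ∀ k, k ≠ i → x k = u k := fun k hk =>
        key01 ha hb hab (hx.1 k) (hy.1 k) (congrFun h k) (hj k hk)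
      have hd := dotp_comb w x y a b
      rw [h, hs] at hd
      have hxs : dotp w x = s := by
        obtain rfl : b = 1 - a := by linarith
        nlinarith [mul_nonneg ha.le (sub_nonneg.2 hx.2), mul_nonneg hb.le (sub_nonneg.2 hy.2)]
      funext k
      by_cases hki : k = i
      · subst hki
        have : dotp w x - dotp w u = w k * (x k - u k) := by
          unfold dotp
          rw [← Finset.sum_sub_distrib, Finset.sum_eq_single k]
          · ring
          · intro b _ hb; rw [hk b hb]; ring
          · simp
        rw [hxs, hs, sub_self] at this
        rcases mul_eq_zero.1 this.symm with h | h
        · exact absurd h hwi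
        · linarith
      · exact hk k hki

def base (w : Fin 3 → ℝ) (i : Fin 3) (e : Fin 2 → Bool) : ℝ :=
  ∑ j, w (i.succAbove j) * vt e j

def tau (w : Fin 3 → ℝ) (s : ℝ) (q : Fin 3 × (Fin 2 → Bool)) : ℝ :=
  (s - base w q.1 q.2) / w q.1

def good (w : Fin 3 → ℝ) (s : ℝ) (q : Fin 3 × (Fin 2 → Bool)) : Prop :=
  w q.1 ≠ 0 ∧ 0 < tau w s q ∧ tau w s q < 1

def pt (w : Fin 3 → ℝ) (s : ℝ) (q : Fin 3 × (Fin 2 → Bool)) : Fin 3 → ℝ :=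
  q.1.insertNth (tau w s q) (vt q.2)

lemma dotp_succAbove (w u : Fin 3 → ℝ) (i : Fin 3) :
    dotp w u = w i * u i + ∑ j, w (i.succAbove j) * u (i.succAbove j) := by
  unfold dotp; exact Fin.sum_univ_succAbove _ i

lemma Eset_eq (w : Fin 3 → ℝ) (s : ℝ) : Eset w s = pt w s '' {q | good w s q} := by
  ext u
  constructor
  · rintro ⟨i, hj, h0, h1, hwi, hs⟩
    obtain ⟨e, he⟩ := exists_vt (fun j => u (i.succAbove j))
      (fun j => hj _ (Fin.succAbove_ne i j))
    have ht : tau w s (i, e) = u i := by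
      simp only [tau, base, ← he]
      rw [div_eq_iff hwi, ← hs, dotp_succAbove w u i]; ring
    refine ⟨(i, e), ⟨hwi, by rw [ht]; exact h0, by rw [ht]; exact h1⟩, ?_⟩
    simp only [pt, ht, ← he]
    exact Fin.insertNth_self_removeNth i u
  · rintro ⟨⟨i, e⟩, ⟨hwi, h0, h1⟩, rfl⟩
    refine ⟨i, ?_, ?_, ?_, hwi, ?_⟩
    · intro j hj
      obtain ⟨k, rfl⟩ := Fin.exists_succAbove_eq hj
      simpa [pt] using vt_cases e k
    · simpa [pt] using h0
    · simpa [pt] using h1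
    · rw [dotp_succAbove _ _ i]
      simp only [pt, Fin.insertNth_apply_same, Fin.insertNth_apply_succAbove]
      simp only [tau]
      simp only at hwi
      change w i * ((s - base w i e) / w i) + base w i e = s
      field_simp
      ring

lemma pt_injOn (w : Fin 3 → ℝ) (s : ℝ) : Set.InjOn (pt w s) {q | good w s q} := by
  rintro ⟨i, e⟩ ⟨hwi, h0, h1⟩ ⟨i', e'⟩ ⟨hwi', h0', h1'⟩ h
  have hii : i = i' := by
    by_contra hne
    obtain ⟨k, hk⟩ := Fin.exists_succAbove_eq hne
    have := congrFun h i
    simp only [pt, Fin.insertNth_apply_same] at this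
    rw [← hk] at this h0 h1
    simp only [Fin.insertNth_apply_succAbove] at this
    rcases vt_cases e' k with h | h <;> rw [h] at this <;> linarith
  subst hii
  have : vt e = vt e' := by
    funext k
    have := congrFun h (i.succAbove k)
    simpa [pt] using this
  rw [vt_inj this]

open Classical in
lemma ncard_E (w : Fin 3 → ℝ) (s : ℝ) :
    (Eset w s).ncard = ∑ q, if good w s q then 1 else 0 := by
  rw [Eset_eq, Set.InjOn.ncard_image (pt_injOn w s), ← Finset.card_filter,
    ← Set.ncard_coe_finset]
  simp

open Classical in
lemma ncard_V (w : Fin 3 → ℝ) (s : ℝ) :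
    (Vset w s).ncard = ∑ e, if dotp w (vt e) ≤ s then 1 else 0 := by
  rw [Vset, Set.ncard_image_of_injective _ vt_inj, ← Finset.card_filter,
    ← Set.ncard_coe_finset]
  simp

lemma dotp_neg_left (w u : Fin 3 → ℝ) : dotp (-w) u = - dotp w u := by
  simp [dotp]

lemma Eset_neg (w : Fin 3 → ℝ) (s : ℝ) : Eset (-w) (-s) = Eset w s := by
  ext u
  simp [Eset, dotp_neg_left]

open Classical in
lemma nVert_half (w : Fin 3 → ℝ) (s : ℝ) :
    nVert (half w s) = (Vset w s).ncard + (Eset w s).ncard := by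
  have f1 : (Vset w s).Finite := (Set.toFinite _).image _
  have f2 : (Eset w s).Finite := by rw [Eset_eq]; exact (Set.toFinite _).image _
  rw [nVert, ext_char, Set.ncard_union_eq _ f1 f2]
  · rw [Set.disjoint_left]
    rintro _ ⟨e, he, rfl⟩ ⟨i, -, h0, h1, -⟩
    rcases vt_cases e i with h | h <;> rw [h] at h0 h1 <;> linarith

open Classical in
lemma total (w : Fin 3 → ℝ) (s : ℝ) (hs : ∀ e, dotp w (vt e) ≠ s) :
    (nVert (half w s) : ℝ) + (nVert (half (-w) (-s)) : ℝ) =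
      8 + 2 * ∑ q, if good w s q then (1:ℝ) else 0 := by
  have hV : ((Vset w s).ncard : ℝ) + ((Vset (-w) (-s)).ncard : ℝ) = 8 := by
    rw [ncard_V, ncard_V]
    push_cast
    rw [← Finset.sum_add_distrib]
    rw [Finset.sum_congr rfl (g := fun _ => (1:ℝ))]
    · simp
    · intro e _
      rw [dotp_neg_left]
      rcases lt_or_gt_of_ne (hs e) with h | h
      · simp [h.le, not_le.2 h]
      · simp [h.le, not_le.2 h]
  rw [nVert_half, nVert_half, Eset_neg]
  have := ncard_E w s
  have hE : ((Eset w s).ncard : ℝ) = ∑ q, if good w s q then (1:ℝ) else 0 := by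
    rw [this]; push_cast; rfl
  push_cast
  rw [← hE]
  linarith

lemma integral_ind {A B m m' : ℝ} (h1 : A ≤ m) (h2 : m ≤ m') (h3 : m' ≤ B) :
    ∫ t in A..B, (Set.Ioo m m').indicator (fun _ => (1:ℝ)) t = m' - m := by
  have hsub : Set.Ioo m m' ⊆ Set.Ioc A B :=
    fun t ht => ⟨by linarith [ht.1], by linarith [ht.2]⟩
  rw [intervalIntegral.integral_of_le (by linarith),
    MeasureTheory.setIntegral_indicator measurableSet_Ioo, Set.inter_eq_right.2 hsub]
  simp [h2]

open Classical in
lemma good_ind (w : Fin 3 → ℝ) (r t : ℝ) (q : Fin 3 × (Fin 2 → Bool)) :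
    (if good w (t - r) q then (1:ℝ) else 0) =
      (Set.Ioo (r + base w q.1 q.2 + min (w q.1) 0) (r + base w q.1 q.2 + max (w q.1) 0)).indicator
        (fun _ => (1:ℝ)) t := by
  rw [Set.indicator_apply]
  congr 1
  rw [eq_iff_iff, Set.mem_Ioo]
  unfold good tau
  rcases lt_trichotomy (w q.1) 0 with h | h | h
  · rw [lt_div_iff_of_neg h, div_lt_iff_of_neg h, min_eq_left h.le, max_eq_right h.le]
    constructor
    · rintro ⟨_, h1, h2⟩; constructor <;> linarith
    · rintro ⟨h1, h2⟩; exact ⟨h.ne, by linarith, by linarith⟩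
  · simp only [h, ne_eq, not_true_eq_false, false_and, min_self, max_self, false_iff]
    rintro ⟨h1, h2⟩; linarith
  · rw [lt_div_iff₀ h, div_lt_iff₀ h, min_eq_right h.le, max_eq_left h.le]
    constructor
    · rintro ⟨_, h1, h2⟩; constructor <;> linarith
    · rintro ⟨h1, h2⟩; exact ⟨h.ne', by linarith, by linarith⟩

lemma bnd {n : ℕ} (w u : Fin n → ℝ) (hu : ∀ i, 0 ≤ u i ∧ u i ≤ 1) :
    ∑ i, min (w i) 0 ≤ ∑ i, w i * u i ∧ ∑ i, w i * u i ≤ ∑ i, max (w i) 0 := by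
  constructor <;> refine Finset.sum_le_sum fun i _ => ?_
  · rcases le_total (w i) 0 with h | h
    · rw [min_eq_left h]; nlinarith [hu i]
    · rw [min_eq_right h]; exact mul_nonneg h (hu i).1
  · rcases le_total (w i) 0 with h | h
    · rw [max_eq_right h]; exact mul_nonpos_of_nonpos_of_nonneg h (hu i).1
    · rw [max_eq_left h]; nlinarith [hu i]

lemma main_integral (w : Fin 3 → ℝ) (r : ℝ) (hw : w ≠ 0) :
    ((r + ∑ i, max (w i) 0) - (r + ∑ i, min (w i) 0))⁻¹ *
      ∫ t in (r + ∑ i, min (w i) 0)..(r + ∑ i, max (w i) 0),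
        (((nVert (half w (t - r)) : ℝ) + (nVert (half (-w) (-(t - r))) : ℝ)) / 2) = 8 := by
  classical
  set A := r + ∑ i, min (w i) 0 with hA
  set B := r + ∑ i, max (w i) 0 with hB
  have hBA : B - A = ∑ i, |w i| := by
    rw [hA, hB, add_sub_add_left_eq_sub, ← Finset.sum_sub_distrib]
    refine Finset.sum_congr rfl fun i _ => ?_
    rw [max_sub_min_eq_abs]; simp
  have hpos : 0 < B - A := by
    rw [hBA]
    obtain ⟨i, hi⟩ := Function.ne_iff.1 hw
    exact Finset.sum_pos' (fun i _ => abs_nonneg _) ⟨i, Finset.mem_univ i, abs_pos.2 hi⟩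
  let F : Fin 3 × (Fin 2 → Bool) → ℝ → ℝ := fun q =>
    (Set.Ioo (r + base w q.1 q.2 + min (w q.1) 0) (r + base w q.1 q.2 + max (w q.1) 0)).indicator
        (fun _ => (1:ℝ))
  have hFi : ∀ q, IntervalIntegrable (F q) MeasureTheory.volume A B := by
    intro q
    rw [intervalIntegrable_iff]
    refine MeasureTheory.IntegrableOn.indicator ?_ measurableSet_Ioo
    exact MeasureTheory.integrableOn_const (by simp)
  have hF : ∀ q, ∫ t in A..B, F q t = |w q.1| := by
    rintro ⟨i, e⟩
    have hb := bnd (fun j => w (i.succAbove j)) (vt e) (fun j => by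
      rcases vt_cases e j with h | h <;> simp [h])
    have e1 : ∑ i, min (w i) 0 = _ := Fin.sum_univ_succAbove (fun i => min (w i) 0) i
    have e2 : ∑ i, max (w i) 0 = _ := Fin.sum_univ_succAbove (fun i => max (w i) 0) i
    have := integral_ind (A := A) (B := B) (m := r + base w i e + min (w i) 0)
      (m' := r + base w i e + max (w i) 0)
      (by rw [hA, e1]; unfold base; linarith [hb.1])
      (by linarith [min_le_max (a := w i) (b := 0)])
      (by rw [hB, e2]; unfold base; linarith [hb.2])
    rw [show |w i| = max (w i) 0 - min (w i) 0 by rw [max_sub_min_eq_abs]; simp]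
    rw [show max (w i) 0 - min (w i) 0 =
      (r + base w i e + max (w i) 0) - (r + base w i e + min (w i) 0) by ring, ← this]
  have hae : ∫ t in A..B,
        (((nVert (half w (t - r)) : ℝ) + (nVert (half (-w) (-(t - r))) : ℝ)) / 2) =
      ∫ t in A..B, (4 + ∑ q, F q t) := by
    apply intervalIntegral.integral_congr_ae
    have hfin : (Set.range fun e : Fin 3 → Bool => r + dotp w (vt e)).Finite :=
      Set.finite_range _
    have := hfin.countable.ae_notMem MeasureTheory.volume
    filter_upwards [this] with t ht _
    rw [total w (t - r) (fun e he => ht ⟨e, by simp only [he]; ring⟩)]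
    simp only [good_ind]
    change _ = 4 + ∑ q, F q t
    ring
  have hsum : IntervalIntegrable (fun t => ∑ q, F q t) MeasureTheory.volume A B := by
    have := IntervalIntegrable.sum Finset.univ (fun q _ => hFi q)
    have he : (fun t => ∑ q, F q t) = ∑ q, F q := by
      funext t
      simp
    rw [he]
    exact this
  rw [hae, intervalIntegral.integral_add (by simp) hsum,
    intervalIntegral.integral_finsetSum (fun q _ => hFi q)]
  simp only [hF, intervalIntegral.integral_const, smul_eq_mul]
  rw [Fintype.sum_prod_type]
  simp only [Finset.sum_const, Finset.card_univ, Fintype.card_pi, Fintype.card_bool]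
  simp only [Finset.prod_const, Finset.card_univ, Fintype.card_fin, nsmul_eq_mul]
  rw [← Finset.mul_sum, ← hBA]
  field_simp
  norm_num

/-- Affine image of the cube coordinates. -/
def pmap (x : Fin 3 → ℝ) (A : Fin 3 → Fin 3 → ℝ) (u : Fin 3 → ℝ) : Fin 3 → ℝ :=
  x + ∑ i, u i • A i

lemma pmap_comb (x : Fin 3 → ℝ) (A : Fin 3 → Fin 3 → ℝ) (u v : Fin 3 → ℝ) (a b : ℝ)
    (hab : a + b = 1) : pmap x A (a • u + b • v) = a • pmap x A u + b • pmap x A v := by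
  obtain rfl : b = 1 - a := by linarith
  ext k
  simp only [pmap, Fin.sum_univ_three, Pi.add_apply, Pi.smul_apply, smul_eq_mul]
  ring

lemma pmap_inj (x : Fin 3 → ℝ) (A : Fin 3 → Fin 3 → ℝ) (hA : LinearIndependent ℝ A) :
    Function.Injective (pmap x A) := by
  intro u v h
  have h' : ∑ i, (u i - v i) • A i = 0 := by
    simp only [sub_smul, Finset.sum_sub_distrib]
    exact sub_eq_zero.2 (add_left_cancel h)
  funext i
  exact sub_eq_zero.1 (Fintype.linearIndependent_iff.1 hA _ h' i)

lemma nVert_pmap (x : Fin 3 → ℝ) (A : Fin 3 → Fin 3 → ℝ) (hA : LinearIndependent ℝ A)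
    (S : Set (Fin 3 → ℝ)) : nVert (pmap x A '' S) = nVert S := by
  have hi := pmap_inj x A hA
  have : Set.extremePoints ℝ (pmap x A '' S) = pmap x A '' Set.extremePoints ℝ S := by
    ext y
    simp only [mem_extremePoints_iff_left, Set.mem_image]
    constructor
    · rintro ⟨⟨u, hu, rfl⟩, h⟩
      refine ⟨u, ⟨hu, ?_⟩, rfl⟩
      rintro p hp q hq ⟨a, b, ha, hb, hab, rfl⟩
      exact hi (h _ ⟨p, hp, rfl⟩ _ ⟨q, hq, rfl⟩
        ⟨a, b, ha, hb, hab, (pmap_comb x A p q a b hab).symm⟩)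
    · rintro ⟨u, ⟨hu, h⟩, rfl⟩
      refine ⟨⟨u, hu, rfl⟩, ?_⟩
      rintro _ ⟨p, hp, rfl⟩ _ ⟨q, hq, rfl⟩ ⟨a, b, ha, hb, hab, he⟩
      rw [← pmap_comb x A p q a b hab] at he
      rw [h p hp q hq ⟨a, b, ha, hb, hab, hi he⟩]
  rw [nVert, this, Set.ncard_image_of_injective _ hi, nVert]

def cube : Set (Fin 3 → ℝ) := {u | ∀ i, 0 ≤ u i ∧ u i ≤ 1}

lemma P_eq (a b c x : Fin 3 → ℝ) :
    {x} + segment ℝ 0 a + segment ℝ 0 b + segment ℝ 0 c = pmap x ![a, b, c] '' cube := by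
  ext y
  simp only [segment_eq_image, Set.mem_add, Set.mem_image, Set.mem_singleton_iff, smul_zero,
    zero_add, Set.mem_Icc]
  constructor
  · rintro ⟨_, ⟨_, ⟨_, rfl, _, ⟨α, hα, rfl⟩, rfl⟩, _, ⟨β, hβ, rfl⟩, rfl⟩, _, ⟨γ, hγ, rfl⟩, rfl⟩
    refine ⟨![α, β, γ], ?_, ?_⟩
    · intro i; fin_cases i <;> simp [hα, hβ, hγ]
    · simp [pmap, Fin.sum_univ_three, add_assoc]
  · rintro ⟨u, hu, rfl⟩
    refine ⟨_, ⟨_, ⟨_, rfl, _, ⟨u 0, hu 0, rfl⟩, rfl⟩, _, ⟨u 1, hu 1, rfl⟩, rfl⟩, _,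
      ⟨u 2, hu 2, rfl⟩, ?_⟩
    simp [pmap, Fin.sum_univ_three, add_assoc]

lemma dotp_pmap (z x : Fin 3 → ℝ) (A : Fin 3 → Fin 3 → ℝ) (u : Fin 3 → ℝ) :
    dotp z (pmap x A u) = dotp z x + dotp (fun i => dotp z (A i)) u := by
  simp only [dotp, pmap, Fin.sum_univ_three, Pi.add_apply, Pi.smul_apply, smul_eq_mul]
  ring

lemma w_ne (z : Fin 3 → ℝ) (hz : z ≠ 0) (A : Fin 3 → Fin 3 → ℝ) (hA : LinearIndependent ℝ A) :
    (fun i => dotp z (A i)) ≠ 0 := by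
  intro h
  apply hz
  have hsp : Submodule.span ℝ (Set.range A) = ⊤ :=
    hA.span_eq_top_of_card_eq_finrank (by simp)
  have hmem : z ∈ Submodule.span ℝ (Set.range A) := by rw [hsp]; trivial
  obtain ⟨u, hu⟩ := (Submodule.mem_span_range_iff_exists_fun ℝ).1 hmem
  have h1 := dotp_pmap z 0 A u
  rw [h] at h1
  have h2 : pmap 0 A u = z := by simp [pmap, hu]
  rw [h2] at h1
  have h3 : z ⬝ᵥ z = 0 := by
    change dotp z z = 0
    rw [h1]; simp [dotp]
  exact dotProduct_self_eq_zero.1 h3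

/-- A parallelepiped is a critical polytope: for every direction, the
expected number of vertices of the two pieces of a uniform random cut equals `8`, its
number of vertices. -/
theorem parallelepiped_critical (a b c x : Fin 3 → ℝ)
    (habc : LinearIndependent ℝ ![a, b, c])
    (P : Set (Fin 3 → ℝ))
    (hP : P = {x} + segment ℝ 0 a + segment ℝ 0 b + segment ℝ 0 c)
    (z : Fin 3 → ℝ) (hz : z ≠ 0) :
    (tMax P z - tMin P z)⁻¹ *
      ∫ t in tMin P z..tMax P z,
        (((nVert (P ∩ {y | dotp z y ≤ t}) : ℝ) +
          (nVert (P ∩ {y | t ≤ dotp z y}) : ℝ)) / 2) = 8 := by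
  classical
  set A : Fin 3 → Fin 3 → ℝ := ![a, b, c] with hAdef
  rw [P_eq, ← hAdef] at hP
  set w : Fin 3 → ℝ := fun i => dotp z (A i) with hwdef
  have hw : w ≠ 0 := w_ne z hz A habc
  have hmin : tMin P z = dotp z x + ∑ i, min (w i) 0 := by
    apply IsLeast.csInf_eq
    constructor
    · rw [hP]
      refine ⟨_, ⟨vt fun i => decide (w i < 0), fun i => ?_, rfl⟩, ?_⟩
      · rcases vt_cases (fun i => decide (w i < 0)) i with h | h <;> simp [h]
      · rw [dotp_pmap]
        congr 1
        refine Finset.sum_congr rfl fun i _ => ?_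
        change w i * _ = _
        by_cases h : w i < 0
        · simp [vt, h, h.le]
        · simp [vt, h, not_lt.1 h]
    · rintro _ ⟨y, hy, rfl⟩
      rw [hP] at hy
      obtain ⟨u, hu, rfl⟩ := hy
      rw [dotp_pmap]
      exact add_le_add le_rfl (bnd w u hu).1
  have hmax : tMax P z = dotp z x + ∑ i, max (w i) 0 := by
    apply IsGreatest.csSup_eq
    constructor
    · rw [hP]
      refine ⟨_, ⟨vt fun i => decide (0 < w i), fun i => ?_, rfl⟩, ?_⟩
      · rcases vt_cases (fun i => decide (0 < w i)) i with h | h <;> simp [h]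
      · rw [dotp_pmap]
        congr 1
        refine Finset.sum_congr rfl fun i _ => ?_
        change w i * _ = _
        by_cases h : 0 < w i
        · simp [vt, h, h.le]
        · simp [vt, h, not_lt.1 h]
    · rintro _ ⟨y, hy, rfl⟩
      rw [hP] at hy
      obtain ⟨u, hu, rfl⟩ := hy
      rw [dotp_pmap]
      exact add_le_add le_rfl (bnd w u hu).2
  have hle : ∀ t, nVert (P ∩ {y | dotp z y ≤ t}) = nVert (half w (t - dotp z x)) := by
    intro t
    rw [← nVert_pmap x A habc (half _ _)]
    congr 1
    ext y
    rw [hP]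
    constructor
    · rintro ⟨⟨u, hu, rfl⟩, h⟩
      rw [Set.mem_setOf_eq, dotp_pmap] at h
      change _ + dotp w u ≤ _ at h
      exact ⟨u, ⟨hu, by linarith⟩, rfl⟩
    · rintro ⟨u, ⟨hu, h⟩, rfl⟩
      refine ⟨⟨u, hu, rfl⟩, ?_⟩
      rw [Set.mem_setOf_eq, dotp_pmap]
      change _ + dotp w u ≤ _
      linarith
  have hge : ∀ t, nVert (P ∩ {y | t ≤ dotp z y}) = nVert (half (-w) (-(t - dotp z x))) := by
    intro t
    rw [← nVert_pmap x A habc (half _ _)]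
    congr 1
    ext y
    rw [hP]
    constructor
    · rintro ⟨⟨u, hu, rfl⟩, h⟩
      rw [Set.mem_setOf_eq, dotp_pmap] at h
      change _ ≤ _ + dotp w u at h
      exact ⟨u, ⟨hu, by rw [dotp_neg_left]; linarith⟩, rfl⟩
    · rintro ⟨u, ⟨hu, h⟩, rfl⟩
      refine ⟨⟨u, hu, rfl⟩, ?_⟩
      rw [dotp_neg_left] at h
      rw [Set.mem_setOf_eq, dotp_pmap]
      change _ ≤ _ + dotp w u
      linarith
  rw [hmin, hmax]
  simp only [hle, hge]
  exact main_integral w (dotp z x) hw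
end
end

section
/- Let k ≥ 2 and ℓ ≥ 2, and let V ⊂ ℝ³ be a set of n = ℓk pairwise linearly independent nonzero vectors partitioned into groups V₁, …, V_ℓ of size k each, such that each group V_j spans a 2-dimensional subspace, no vector of V outside V_j lies in the span of V_j, and for any two vectors u, v from different groups the only elements of V lying in span{u, v} are u and v. Let P be the zonotope generated by V. Then A(P,z) = 2(n − k + 1) for every nonzero z ∈ ℝ³ (equivalently, deg v = 1 + (ℓ−1)k for every v ∈ V in the hypergraph ℱ). -/
open scoped Pointwise BigOperators

noncomputable section

abbrev E3 := Fin 3 → ℝ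

open Matrix Filter Topology

/-- sign pattern -/
def Pat (v : E3) (U T : Finset E3) (y : E3) : Prop :=
  y ⬝ᵥ v = 0 ∧ ∀ w ∈ U, (w ∈ T → 0 < y ⬝ᵥ w) ∧ (w ∉ T → y ⬝ᵥ w < 0)

open Classical in
/-- regions -/
def Reg (v : E3) (U : Finset E3) : Finset (Finset E3) :=
  U.powerset.filter (fun T => ∃ y, Pat v U T y)

lemma mem_Reg {v : E3} {U T : Finset E3} : T ∈ Reg v U ↔ T ⊆ U ∧ ∃ y, Pat v U T y := by
  simp [Reg]

lemma Pat.ne {v : E3} {U T : Finset E3} {y : E3} (h : Pat v U T y) {w : E3} (hw : w ∈ U) :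
    y ⬝ᵥ w ≠ 0 := by
  by_cases hT : w ∈ T
  · exact ((h.2 w hw).1 hT).ne'
  · exact ((h.2 w hw).2 hT).ne

open Classical in
lemma card_Reg_insert (v w : E3) (U : Finset E3) (hw : w ∉ U)
    (h : ∀ T y, Pat v U T y → ∃ y', Pat v U T y' ∧ y' ⬝ᵥ w ≠ 0) :
    (Reg v (insert w U)).card = (Reg v U).card +
      (U.powerset.filter (fun T => (∃ y, Pat v U T y ∧ y ⬝ᵥ w < 0) ∧
        (∃ y, Pat v U T y ∧ 0 < y ⬝ᵥ w))).card := by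
  set A := U.powerset.filter (fun T => ∃ y, Pat v U T y ∧ y ⬝ᵥ w < 0) with hA
  set B := U.powerset.filter (fun T => ∃ y, Pat v U T y ∧ 0 < y ⬝ᵥ w) with hB
  have h1 : Reg v (insert w U) = A ∪ B.image (insert w) := by
    ext T
    simp only [mem_Reg, hA, hB, Finset.mem_union, Finset.mem_filter, Finset.mem_powerset,
      Finset.mem_image]
    constructor
    · rintro ⟨hT, y, hy⟩
      by_cases hwT : w ∈ T
      · right
        refine ⟨T.erase w, ⟨?_, y, ⟨hy.1, ?_⟩, ?_⟩, Finset.insert_erase hwT⟩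
        · intro a ha
          have := hT (Finset.mem_of_mem_erase ha)
          exact (Finset.mem_insert.1 this).resolve_left (Finset.ne_of_mem_erase ha)
        · intro u hu
          have hne : u ≠ w := fun e => hw (e ▸ hu)
          have := hy.2 u (Finset.mem_insert_of_mem hu)
          simpa [hne] using this
        · exact (hy.2 w (Finset.mem_insert_self _ _)).1 hwT
      · left
        refine ⟨?_, y, ⟨hy.1, fun u hu => hy.2 u (Finset.mem_insert_of_mem hu)⟩, ?_⟩
        · intro a ha
          exact (Finset.mem_insert.1 (hT ha)).resolve_left (fun e => hwT (e ▸ ha))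
        · exact (hy.2 w (Finset.mem_insert_self _ _)).2 hwT
    · rintro (⟨hT, y, hy, hyw⟩ | ⟨T', ⟨hT, y, hy, hyw⟩, rfl⟩)
      · refine ⟨hT.trans (Finset.subset_insert _ _), y, hy.1, ?_⟩
        intro u hu
        rcases Finset.mem_insert.1 hu with rfl | hu
        · exact ⟨fun h' => absurd (hT h') hw, fun _ => hyw⟩
        · exact hy.2 u hu
      · refine ⟨Finset.insert_subset_insert _ hT, y, hy.1, ?_⟩
        intro u hu
        rcases Finset.mem_insert.1 hu with rfl | hu
        · exact ⟨fun _ => hyw, fun h' => absurd (Finset.mem_insert_self _ _) h'⟩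
        · have hne : u ≠ w := fun e => hw (e ▸ hu)
          simpa [hne] using hy.2 u hu
  have h2 : Reg v U = A ∪ B := by
    ext T
    simp only [mem_Reg, hA, hB, Finset.mem_union, Finset.mem_filter, Finset.mem_powerset]
    constructor
    · rintro ⟨hT, y, hy⟩
      obtain ⟨y', hy', hne⟩ := h T y hy
      rcases lt_or_gt_of_ne hne with hl | hl
      · exact Or.inl ⟨hT, y', hy', hl⟩
      · exact Or.inr ⟨hT, y', hy', hl⟩
    · rintro (⟨hT, y, hy, _⟩ | ⟨hT, y, hy, _⟩) <;> exact ⟨hT, y, hy⟩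
  have h3 : U.powerset.filter (fun T => (∃ y, Pat v U T y ∧ y ⬝ᵥ w < 0) ∧
        (∃ y, Pat v U T y ∧ 0 < y ⬝ᵥ w)) = A ∩ B := by
    rw [hA, hB, ← Finset.filter_and]
  have hd : Disjoint A (B.image (insert w)) := by
    rw [Finset.disjoint_left]
    intro T hT hT'
    obtain ⟨T', _, rfl⟩ := Finset.mem_image.1 hT'
    have := (Finset.mem_powerset.1 (Finset.mem_filter.1 hT).1)
    exact hw (this (Finset.mem_insert_self _ _))
  have hi : (B.image (insert w)).card = B.card := by
    apply Finset.card_image_of_injOn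
    intro S hS S' hS' heq
    have a1 : w ∉ S := fun hh => hw (Finset.mem_powerset.1 (Finset.mem_filter.1 hS).1 hh)
    have a2 : w ∉ S' := fun hh => hw (Finset.mem_powerset.1 (Finset.mem_filter.1 hS').1 hh)
    have := congrArg (fun X => Finset.erase X w) heq
    simpa [Finset.erase_insert a1, Finset.erase_insert a2] using this
  rw [h1, h2, h3, Finset.card_union_of_disjoint hd, hi, Finset.card_union_add_card_inter]

lemma Pat.pert {v : E3} {U T : Finset E3} {y : E3} (h : Pat v U T y) (y' : E3)
    (hy' : y' ⬝ᵥ v = 0) : ∀ᶠ τ : ℝ in 𝓝 0, Pat v U T (y + τ • y') := by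
  have : ∀ w ∈ U, ∀ᶠ τ : ℝ in 𝓝 0, (w ∈ T → 0 < (y + τ • y') ⬝ᵥ w) ∧
      (w ∉ T → (y + τ • y') ⬝ᵥ w < 0) := by
    intro w hw
    have hc : Tendsto (fun τ : ℝ => (y + τ • y') ⬝ᵥ w) (𝓝 0) (𝓝 (y ⬝ᵥ w)) := by
      have : Continuous (fun τ : ℝ => y ⬝ᵥ w + τ * (y' ⬝ᵥ w)) := by fun_prop
      have := this.tendsto 0
      simpa [add_dotProduct, smul_dotProduct] using this
    by_cases hT : w ∈ T
    · filter_upwards [hc.eventually (lt_mem_nhds ((h.2 w hw).1 hT))] with τ hτ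
      exact ⟨fun _ => hτ, fun h' => absurd hT h'⟩
    · filter_upwards [hc.eventually (gt_mem_nhds ((h.2 w hw).2 hT))] with τ hτ
      exact ⟨fun h' => absurd h' hT, fun _ => hτ⟩
  filter_upwards [(Finset.eventually_all U).2 this] with τ hτ
  exact ⟨by simp [add_dotProduct, smul_dotProduct, h.1, hy'], hτ⟩

lemma Pat.pertpos {v : E3} {U T : Finset E3} {y : E3} (h : Pat v U T y) (y' : E3)
    (hy' : y' ⬝ᵥ v = 0) : ∃ τ : ℝ, 0 < τ ∧ Pat v U T (y + τ • y') := by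
  have h1 := (h.pert y' hy').filter_mono (nhdsWithin_le_nhds (s := Set.Ioi 0))
  obtain ⟨τ, h2, h3⟩ := (h1.and self_mem_nhdsWithin).exists
  exact ⟨τ, h3, h2⟩

/-- direction in `v^⊥` positive on `f` -/
lemma exists_dir (v f : E3) (h : v ⨯₃ f ≠ 0) : ∃ y : E3, y ⬝ᵥ v = 0 ∧ 0 < y ⬝ᵥ f := by
  refine ⟨(v ⬝ᵥ v) • f - (v ⬝ᵥ f) • v, ?_, ?_⟩
  · simp [sub_dotProduct, smul_dotProduct]
    rw [dotProduct_comm f v]; ring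
  · have h1 : ((v ⬝ᵥ v) • f - (v ⬝ᵥ f) • v) ⬝ᵥ f = (v ⨯₃ f) ⬝ᵥ (v ⨯₃ f) := by
      rw [cross_dot_cross]; simp only [sub_dotProduct, smul_dotProduct, smul_eq_mul]
      rw [dotProduct_comm f v]
    rw [h1]
    have h2 : 0 ≤ (v ⨯₃ f) ⬝ᵥ (v ⨯₃ f) := by
      rw [vec3_dotProduct]; nlinarith [sq_nonneg ((v ⨯₃ f) 0), sq_nonneg ((v ⨯₃ f) 1), sq_nonneg ((v ⨯₃ f) 2)]
    exact lt_of_le_of_ne h2 (fun e => h (dotProduct_self_eq_zero.1 e.symm))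

lemma perp_eq (v f y : E3) (h : v ⨯₃ f ≠ 0) (h1 : y ⬝ᵥ v = 0) (h2 : y ⬝ᵥ f = 0) :
    ∃ s : ℝ, y = s • (v ⨯₃ f) := by
  set n := v ⨯₃ f with hn
  have a : y ⨯₃ n = 0 := by
    rw [hn, cross_cross_eq_smul_sub_smul', h2, dotProduct_comm v y, h1]; simp
  have b : n ⨯₃ (y ⨯₃ n) = 0 := by rw [a]; simp
  rw [cross_cross_eq_smul_sub_smul'] at b
  have hnn : n ⬝ᵥ n ≠ 0 := fun e => h (dotProduct_self_eq_zero.1 e)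
  refine ⟨(n ⬝ᵥ n)⁻¹ * (y ⬝ᵥ n), ?_⟩
  rw [mul_smul, ← sub_eq_zero.1 b, smul_smul, inv_mul_cancel₀ hnn, one_smul]

lemma card_Reg_indep (v : E3) (U : Finset E3) (hv : ∀ f ∈ U, v ⨯₃ f ≠ 0)
    (hU : ∀ f ∈ U, ∀ g ∈ U, f ≠ g → (v ⨯₃ f) ⬝ᵥ g ≠ 0) (hne : U.Nonempty) :
    (Reg v U).card = 2 * U.card := by
  classical
  induction U using Finset.induction_on with
  | empty => simp at hne
  | insert f U hf ih =>
    have hvf := hv f (Finset.mem_insert_self _ _)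
    obtain ⟨d, hd1, hd2⟩ := exists_dir v f hvf
    rw [card_Reg_insert v f U hf, Finset.card_insert_of_notMem hf]
    swap
    · intro T y hy
      by_cases h0 : y ⬝ᵥ f = 0
      · obtain ⟨τ, h1, h2⟩ := hy.pertpos d hd1
        refine ⟨_, h2, ?_⟩
        simp only [add_dotProduct, smul_dotProduct, h0, zero_add, smul_eq_mul]
        positivity
      · exact ⟨y, hy, h0⟩
    rcases U.eq_empty_or_nonempty with rfl | hUne
    · have e1 : Reg v ∅ = {∅} := by
        ext T; simp only [mem_Reg, Finset.subset_empty, Finset.mem_singleton]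
        exact ⟨fun h => h.1, fun h => ⟨h, 0, by simp [Pat]⟩⟩
      have e2 : ((∅ : Finset E3).powerset.filter (fun T => (∃ y, Pat v ∅ T y ∧ y ⬝ᵥ f < 0) ∧
        (∃ y, Pat v ∅ T y ∧ 0 < y ⬝ᵥ f))) = {∅} := by
        ext T
        simp only [Finset.mem_filter, Finset.mem_powerset, Finset.subset_empty, Finset.mem_singleton]
        refine ⟨fun h => h.1, fun h => ⟨h, ⟨-d, by simp [Pat, hd1], by simpa using hd2⟩,
          ⟨d, by simp [Pat, hd1], hd2⟩⟩⟩
      rw [e1, e2]; simp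
    · rw [ih (fun g hg => hv g (Finset.mem_insert_of_mem hg))
        (fun g hg g' hg' => hU g (Finset.mem_insert_of_mem hg) g' (Finset.mem_insert_of_mem hg')) hUne]
      set n := v ⨯₃ f with hn
      have hng : ∀ g ∈ U, n ⬝ᵥ g ≠ 0 := fun g hg =>
        hU f (Finset.mem_insert_self _ _) g (Finset.mem_insert_of_mem hg) (fun e => hf (e ▸ hg))
      have hnv : n ⬝ᵥ v = 0 := by rw [dotProduct_comm]; exact dot_self_cross v f
      have hnf : n ⬝ᵥ f = 0 := by rw [dotProduct_comm]; exact dot_cross_self v f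
      have key : ∀ m : E3, m ⬝ᵥ v = 0 → m ⬝ᵥ f = 0 → (∀ g ∈ U, m ⬝ᵥ g ≠ 0) → ∀ T,
          Pat v U T m → (∃ y, Pat v U T y ∧ y ⬝ᵥ f < 0) ∧ (∃ y, Pat v U T y ∧ 0 < y ⬝ᵥ f) := by
        intro m h1 h2 h3 T hT
        constructor
        · obtain ⟨τ, h4, h5⟩ := hT.pertpos (-d) (by simp [hd1])
          refine ⟨_, h5, ?_⟩
          simp only [add_dotProduct, smul_dotProduct, h2, zero_add, smul_eq_mul, neg_dotProduct]
          nlinarith [mul_pos h4 hd2]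
        · obtain ⟨τ, h4, h5⟩ := hT.pertpos d hd1
          refine ⟨_, h5, ?_⟩
          simp only [add_dotProduct, smul_dotProduct, h2, zero_add, smul_eq_mul]
          positivity
      have e2 : (U.powerset.filter (fun T => (∃ y, Pat v U T y ∧ y ⬝ᵥ f < 0) ∧
        (∃ y, Pat v U T y ∧ 0 < y ⬝ᵥ f))) =
          {U.filter (fun g => 0 < n ⬝ᵥ g), U.filter (fun g => n ⬝ᵥ g < 0)} := by
        ext T
        simp only [Finset.mem_filter, Finset.mem_powerset, Finset.mem_insert, Finset.mem_singleton]
        constructor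
        · rintro ⟨hTU, ⟨y1, p1, q1⟩, ⟨y2, p2, q2⟩⟩
          have hy : Pat v U T ((y2 ⬝ᵥ f) • y1 + (-(y1 ⬝ᵥ f)) • y2) := by
            refine ⟨by simp [add_dotProduct, smul_dotProduct, p1.1, p2.1], fun w hw => ⟨fun hT => ?_, fun hT => ?_⟩⟩
            · have i1 := (p1.2 w hw).1 hT
              have i2 := (p2.2 w hw).1 hT
              simp only [add_dotProduct, smul_dotProduct, smul_eq_mul]
              nlinarith [mul_pos q2 i1, mul_pos (neg_pos.2 q1) i2]
            · have i1 := (p1.2 w hw).2 hT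
              have i2 := (p2.2 w hw).2 hT
              simp only [add_dotProduct, smul_dotProduct, smul_eq_mul]
              nlinarith [mul_pos q2 (neg_pos.2 i1), mul_pos (neg_pos.2 q1) (neg_pos.2 i2)]
          obtain ⟨s, hs⟩ := perp_eq v f _ hvf hy.1 (by
            simp only [add_dotProduct, smul_dotProduct, smul_eq_mul]; ring)
          rw [hs, ← hn] at hy
          have hs0 : s ≠ 0 := by
            rintro rfl
            obtain ⟨g, hg⟩ := hUne
            exact hy.ne hg (by simp)
          rcases lt_or_gt_of_ne hs0 with hs0 | hs0
          · right
            ext g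
            simp only [Finset.mem_filter]
            constructor
            · intro hg
              refine ⟨hTU hg, ?_⟩
              have := (hy.2 g (hTU hg)).1 hg
              simp only [smul_dotProduct, smul_eq_mul] at this
              by_contra h
              nlinarith [mul_nonneg (neg_pos.2 hs0).le (not_lt.1 h)]
            · rintro ⟨hg, hlt⟩
              by_contra hT
              have := (hy.2 g hg).2 hT
              simp only [smul_dotProduct, smul_eq_mul] at this
              nlinarith [mul_pos_of_neg_of_neg hs0 hlt]
          · left
            ext g
            simp only [Finset.mem_filter]
            constructor
            · intro hg
              refine ⟨hTU hg, ?_⟩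
              have := (hy.2 g (hTU hg)).1 hg
              simp only [smul_dotProduct, smul_eq_mul] at this
              exact (mul_pos_iff_of_pos_left hs0).1 this
            · rintro ⟨hg, hlt⟩
              by_contra hT
              have := (hy.2 g hg).2 hT
              simp only [smul_dotProduct, smul_eq_mul] at this
              nlinarith [mul_pos hs0 hlt]
        · rintro (rfl | rfl)
          · refine ⟨Finset.filter_subset _ _, key n hnv hnf hng _ ⟨hnv, fun g hg => ⟨?_, ?_⟩⟩⟩
            · intro h; exact (Finset.mem_filter.1 h).2
            · intro h
              have : ¬ 0 < n ⬝ᵥ g := fun h' => h (Finset.mem_filter.2 ⟨hg, h'⟩)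
              exact lt_of_le_of_ne (not_lt.1 this) (hng g hg)
          · refine ⟨Finset.filter_subset _ _, key (-n) (by simp [hnv]) (by simp [hnf])
              (fun g hg => by simpa using hng g hg) _ ⟨by simp [hnv], fun g hg => ⟨?_, ?_⟩⟩⟩
            · intro h; simpa using (Finset.mem_filter.1 h).2
            · intro h
              have : ¬ n ⬝ᵥ g < 0 := fun h' => h (Finset.mem_filter.2 ⟨hg, h'⟩)
              simpa using lt_of_le_of_ne (not_lt.1 this) (hng g hg).symm
      rw [e2, Finset.card_pair]
      · ring
      · intro e
        obtain ⟨g, hg⟩ := hUne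
        have := congrArg (fun X => g ∈ X) e
        simp only [Finset.mem_filter, hg, true_and, eq_iff_iff] at this
        rcases lt_or_gt_of_ne (hng g hg) with h | h
        · exact lt_asymm h (this.2 h)
        · exact lt_asymm h (this.1 h)

lemma card_Reg_par (v u : E3) (U X : Finset E3) (hu : u ∈ U) (hd : Disjoint X U)
    (hX : ∀ w ∈ X, ∃ α β : ℝ, α ≠ 0 ∧ w = α • u + β • v) :
    (Reg v (X ∪ U)).card = (Reg v U).card := by
  classical
  induction X using Finset.induction_on with
  | empty => simp
  | insert f X hf ih =>
    rw [Finset.disjoint_insert_left] at hd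
    obtain ⟨α, β, hα, hfe⟩ := hX f (Finset.mem_insert_self _ _)
    have hfy : ∀ T y, Pat v (X ∪ U) T y → y ⬝ᵥ f = α * (y ⬝ᵥ u) := by
      intro T y hy
      rw [hfe, dotProduct_add, dotProduct_smul, dotProduct_smul, hy.1]; simp
    have huX : u ∈ X ∪ U := Finset.mem_union_right _ hu
    rw [Finset.insert_union, card_Reg_insert v f (X ∪ U) (by simp [hf, hd.1]),
      ih hd.2 (fun w hw => hX w (Finset.mem_insert_of_mem hw))]
    · rw [Nat.add_eq_left, Finset.card_eq_zero, Finset.filter_eq_empty_iff]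
      rintro T - ⟨⟨y1, p1, q1⟩, ⟨y2, p2, q2⟩⟩
      rw [hfy T _ p1] at q1
      rw [hfy T _ p2] at q2
      by_cases hT : u ∈ T
      · have i1 := (p1.2 u huX).1 hT
        have i2 := (p2.2 u huX).1 hT
        have := (mul_pos_iff_of_pos_right i2).1 q2
        nlinarith [mul_pos this i1]
      · have i1 := (p1.2 u huX).2 hT
        have i2 := (p2.2 u huX).2 hT
        have : 0 < α := by
          by_contra h
          have := mul_nonneg_of_nonpos_of_nonpos (not_lt.1 h) i1.le
          linarith
        nlinarith [mul_pos this (neg_pos.2 i2)]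
    · intro T y hy
      refine ⟨y, hy, ?_⟩
      rw [hfy T y hy]
      exact mul_ne_zero hα (hy.ne huX)

lemma gordan (v : E3) (hv : v ≠ 0) (T : Finset E3) (a : E3 → E3) :
    (∃ y : E3, y ⬝ᵥ v = 0 ∧ ∀ w ∈ T, 0 < y ⬝ᵥ a w) ∨
    ∃ lam : E3 → ℝ, (∀ w ∈ T, 0 ≤ lam w) ∧ (∃ w ∈ T, 0 < lam w) ∧
      ∃ μ : ℝ, ∑ w ∈ T, lam w • a w = μ • v := by
  classical
  have hvv : v ⬝ᵥ v ≠ 0 := fun e => hv (dotProduct_self_eq_zero.1 e)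
  set b : E3 → E3 := fun w => a w - ((a w ⬝ᵥ v) / (v ⬝ᵥ v)) • v with hb
  let φ : (T → ℝ) →ₗ[ℝ] E3 := ∑ w : T, (LinearMap.proj w).smulRight (b w)
  have hφ : ∀ l, φ l = ∑ w : T, l w • b w := by
    intro l; simp [φ, LinearMap.sum_apply]
  set K : Set E3 := φ '' (stdSimplex ℝ T) with hK
  have hKc : Convex ℝ K := (convex_stdSimplex ℝ T).linear_image φ
  have hKcl : IsClosed K :=
    ((isCompact_stdSimplex ℝ T).image (LinearMap.continuous_of_finiteDimensional φ)).isClosed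
  by_cases h0 : (0 : E3) ∈ K
  · right
    obtain ⟨l, hl, hl0⟩ := h0
    refine ⟨fun w => if h : w ∈ T then l ⟨w, h⟩ else 0, ?_, ?_, ?_⟩
    · intro w hw; simp only [hw, dite_true]; exact hl.1 _
    · by_contra hcon
      push Not at hcon
      have : ∑ w : T, l w ≤ 0 := Finset.sum_nonpos (fun w _ => by
        have := hcon w w.2
        simpa using this)
      have := hl.2
      linarith
    · rw [← Finset.sum_coe_sort]
      simp only [Finset.coe_mem, dite_true, Subtype.coe_eta]
      rw [hφ] at hl0
      refine ⟨∑ w : T, l w * ((a w ⬝ᵥ v) / (v ⬝ᵥ v)), ?_⟩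
      simp only [hb, smul_sub, Finset.sum_sub_distrib, smul_smul] at hl0
      rw [Finset.sum_smul]
      exact sub_eq_zero.1 hl0
  · left
    obtain ⟨f, u, hf0, hf⟩ := geometric_hahn_banach_point_closed hKc hKcl h0
    have hfb : ∀ w ∈ T, 0 < f (b w) := by
      intro w hw
      have : b w ∈ K := ⟨Pi.single ⟨w, hw⟩ 1, single_mem_stdSimplex ℝ _, by
        rw [hφ, Finset.sum_eq_single ⟨w, hw⟩]
        · simp
        · intro x _ hx; simp [hx]
        · simp⟩
      have := hf _ this
      simp at hf0
      linarith
    set y := (dotProductEquiv ℝ (Fin 3)).symm f.toLinearMap with hy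
    have hyf : ∀ x, y ⬝ᵥ x = f x := by
      intro x
      have : dotProductEquiv ℝ (Fin 3) y = f.toLinearMap := by simp [hy]
      have := congrArg (fun g => g x) this
      simpa using this
    refine ⟨y - ((y ⬝ᵥ v) / (v ⬝ᵥ v)) • v, ?_, ?_⟩
    · simp only [sub_dotProduct, smul_dotProduct, smul_eq_mul]
      field_simp; ring
    · intro w hw
      have := hfb w hw
      rw [← hyf, hb] at this
      simp only [dotProduct_sub, dotProduct_smul, smul_eq_mul] at this
      simp only [sub_dotProduct, smul_dotProduct, smul_eq_mul]
      rw [dotProduct_comm v (a w)]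
      convert this using 2
      field_simp

lemma pert1 (c δ : ℝ) (h0 : 0 ≤ c) (h1 : c ≤ 1) (hc0 : c = 0 → 0 ≤ δ) (hc1 : c = 1 → δ ≤ 0) :
    ∀ᶠ τ : ℝ in 𝓝[>] 0, (0 ≤ c + τ * δ ∧ c + τ * δ ≤ 1) ∧
      ((δ ≠ 0 ∨ 0 < c ∧ c < 1) → 0 < c + τ * δ ∧ c + τ * δ < 1) := by
  have hpos : ∀ᶠ τ : ℝ in 𝓝[>] 0, 0 < τ := self_mem_nhdsWithin
  have hc : Tendsto (fun τ : ℝ => c + τ * δ) (𝓝[>] 0) (𝓝 c) := by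
    have : Continuous (fun τ : ℝ => c + τ * δ) := by fun_prop
    have := this.tendsto 0
    simp only [zero_mul, add_zero] at this
    exact this.mono_left nhdsWithin_le_nhds
  have A : ∀ᶠ τ : ℝ in 𝓝[>] 0, 0 ≤ c + τ * δ ∧ ((δ ≠ 0 ∨ 0 < c ∧ c < 1) → 0 < c + τ * δ) := by
    rcases h0.eq_or_lt with h | h
    · filter_upwards [hpos] with τ hτ
      have := hc0 h.symm
      subst h
      refine ⟨by positivity, ?_⟩
      rintro (h | h)
      · have : 0 < δ := lt_of_le_of_ne this h.symm
        positivity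
      · exact absurd h.1 (lt_irrefl _)
    · filter_upwards [hc.eventually (lt_mem_nhds h)] with τ hτ
      exact ⟨hτ.le, fun _ => hτ⟩
  have B : ∀ᶠ τ : ℝ in 𝓝[>] 0, c + τ * δ ≤ 1 ∧ ((δ ≠ 0 ∨ 0 < c ∧ c < 1) → c + τ * δ < 1) := by
    rcases h1.eq_or_lt with h | h
    · filter_upwards [hpos] with τ hτ
      have := hc1 h
      refine ⟨by nlinarith, ?_⟩
      rintro (h' | h')
      · have : δ < 0 := lt_of_le_of_ne this h'
        nlinarith
      · linarith
    · filter_upwards [hc.eventually (gt_mem_nhds h)] with τ hτ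
      exact ⟨hτ.le, fun _ => hτ⟩
  filter_upwards [A, B] with τ a b
  exact ⟨⟨a.1, b.1⟩, fun h => ⟨a.2 h, b.2 h⟩⟩

/-- representation of a point of the zonotope -/
def ZRep (V : Finset E3) (x p : E3) (c : E3 → ℝ) : Prop :=
  (∀ v ∈ V, 0 ≤ c v ∧ c v ≤ 1) ∧ p = x + ∑ v ∈ V, c v • v

lemma mem_zono (V : Finset E3) (x p : E3) :
    p ∈ ({x} + ∑ v ∈ V, segment ℝ 0 v : Set E3) ↔ ∃ c, ZRep V x p c := by
  simp only [Set.singleton_add, Set.image_add_left, Set.mem_preimage]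
  rw [Set.mem_finsetSum]
  constructor
  · rintro ⟨g, hg, hs⟩
    have : ∀ v : E3, ∃ c : ℝ, v ∈ V → (0 ≤ c ∧ c ≤ 1) ∧ g v = c • v := by
      intro v
      by_cases hv : v ∈ V
      · have := hg hv
        rw [segment_eq_image] at this
        obtain ⟨c, hc, he⟩ := this
        exact ⟨c, fun _ => ⟨hc, by rw [← he]; simp⟩⟩
      · exact ⟨0, fun h => absurd h hv⟩
    choose c hc using this
    refine ⟨c, fun v hv => (hc v hv).1, ?_⟩
    rw [← Finset.sum_congr rfl (fun v hv => (hc v hv).2), hs]; abel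
  · rintro ⟨c, hc, rfl⟩
    refine ⟨fun v => c v • v, fun {v} hv => ?_, by abel⟩
    rw [segment_eq_image]
    exact ⟨c v, hc v hv, by simp⟩

lemma ZRep.pert {V : Finset E3} {x p : E3} {c : E3 → ℝ} (h : ZRep V x p c) (δ : E3 → ℝ)
    (h0 : ∀ v ∈ V, c v = 0 → 0 ≤ δ v) (h1 : ∀ v ∈ V, c v = 1 → δ v ≤ 0) :
    ∀ᶠ τ : ℝ in 𝓝[>] 0, ZRep V x (p + τ • ∑ v ∈ V, δ v • v) (fun v => c v + τ * δ v) ∧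
      ∀ v ∈ V, (δ v ≠ 0 ∨ 0 < c v ∧ c v < 1) → 0 < c v + τ * δ v ∧ c v + τ * δ v < 1 := by
  have := (Finset.eventually_all V).2 (fun v hv =>
    pert1 (c v) (δ v) (h.1 v hv).1 (h.1 v hv).2 (h0 v hv) (h1 v hv))
  filter_upwards [this] with τ hτ
  refine ⟨⟨fun v hv => (hτ v hv).1, ?_⟩, fun v hv => (hτ v hv).2⟩
  rw [h.2, Finset.smul_sum]
  simp only [add_smul, Finset.sum_add_distrib, mul_smul]
  abel

lemma ext_dir_s18 {V : Finset E3} {x p z : E3} {t : ℝ} {c : E3 → ℝ}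
    (hp : p ∈ Set.extremePoints ℝ (({x} + ∑ v ∈ V, segment ℝ 0 v : Set E3) ∩ {x | z ⬝ᵥ x = t}))
    (h : ZRep V x p c) (δ : E3 → ℝ) (hδ : ∀ v ∈ V, δ v ≠ 0 → 0 < c v ∧ c v < 1)
    (hz : z ⬝ᵥ (∑ v ∈ V, δ v • v) = 0) : ∑ v ∈ V, δ v • v = 0 := by
  set d := ∑ v ∈ V, δ v • v with hd
  have e1 := h.pert δ
    (fun v hv h' => by by_contra hc; have := (hδ v hv (by linarith)).1; linarith)
    (fun v hv h' => by by_contra hc; have := (hδ v hv (by linarith)).2; linarith)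
  have e2 := h.pert (fun v => - δ v)
    (fun v hv h' => by by_contra hc; have := (hδ v hv (by linarith)).1; linarith)
    (fun v hv h' => by by_contra hc; have := (hδ v hv (by linarith)).2; linarith)
  have e3 : ∑ v ∈ V, (-δ v) • v = -d := by simp [hd]
  obtain ⟨τ, ⟨⟨r1, -⟩, ⟨r2, -⟩⟩, hτ⟩ := ((e1.and e2).and self_mem_nhdsWithin).exists
  rw [e3] at r2
  have hτ : 0 < τ := hτ
  have hpt : z ⬝ᵥ p = t := hp.1.2
  have m1 : p + τ • d ∈ (({x} + ∑ v ∈ V, segment ℝ 0 v : Set E3) ∩ {x | z ⬝ᵥ x = t}) :=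
    ⟨(mem_zono V x _).2 ⟨_, r1⟩, by
      simp only [Set.mem_ofPred_eq, dotProduct_add, dotProduct_smul, hz, hpt]; simp⟩
  have m2 : p + τ • (-d) ∈ (({x} + ∑ v ∈ V, segment ℝ 0 v : Set E3) ∩ {x | z ⬝ᵥ x = t}) :=
    ⟨(mem_zono V x _).2 ⟨_, r2⟩, by
      simp only [Set.mem_ofPred_eq, dotProduct_add, dotProduct_smul, dotProduct_neg, hz, hpt]; simp⟩
  have := hp.2 m1 m2 ⟨1/2, 1/2, by norm_num, by norm_num, by norm_num, by
    module⟩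
  have h3 : τ • d = 0 := by simpa using this
  exact (smul_eq_zero.1 h3).resolve_left hτ.ne'

lemma sum_ite_smul {V : Finset E3} {v : E3} (hv : v ∈ V) (a : ℝ) :
    ∑ u ∈ V, (if u = v then a else 0) • u = a • v := by
  simp [ite_smul, hv]

lemma ext_zne {V : Finset E3} (hne : ∀ v ∈ V, v ≠ 0)
    {x p z : E3} {t : ℝ} {c : E3 → ℝ}
    (hp : p ∈ Set.extremePoints ℝ (({x} + ∑ v ∈ V, segment ℝ 0 v : Set E3) ∩ {x | z ⬝ᵥ x = t}))
    (h : ZRep V x p c) {v : E3} (hv : v ∈ V) (hc : 0 < c v ∧ c v < 1) : z ⬝ᵥ v ≠ 0 := by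
  intro hz
  have := ext_dir_s18 hp h (fun u => if u = v then 1 else 0) (fun u _ hu => by
    have : u = v := by by_contra h; simp [h] at hu
    exact this ▸ hc) (by rw [sum_ite_smul hv]; simpa using hz)
  rw [sum_ite_smul hv] at this
  exact hne v hv (by simpa using this)

lemma ext_uniq {V : Finset E3} (hne : ∀ v ∈ V, v ≠ 0)
    (hpair : ∀ u ∈ V, ∀ v ∈ V, u ≠ v → ∀ c : ℝ, v ≠ c • u)
    {x p z : E3} {t : ℝ} {c : E3 → ℝ}
    (hp : p ∈ Set.extremePoints ℝ (({x} + ∑ v ∈ V, segment ℝ 0 v : Set E3) ∩ {x | z ⬝ᵥ x = t}))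
    (h : ZRep V x p c) {v w : E3} (hv : v ∈ V) (hc : 0 < c v ∧ c v < 1)
    (hw : w ∈ V) (hcw : 0 < c w ∧ c w < 1) : v = w := by
  by_contra hvw
  have hz := ext_zne hne hp h hv hc
  have hsum : ∑ u ∈ V, ((if u = v then z ⬝ᵥ w else 0) + (if u = w then - (z ⬝ᵥ v) else 0)) • u
      = (z ⬝ᵥ w) • v + (-(z ⬝ᵥ v)) • w := by
    simp only [add_smul, Finset.sum_add_distrib]
    rw [sum_ite_smul hv, sum_ite_smul hw]
  have := ext_dir_s18 hp h (fun u => (if u = v then z ⬝ᵥ w else 0) + (if u = w then - (z ⬝ᵥ v) else 0))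
    (fun u _ hu => by
    by_cases h1 : u = v
    · exact h1 ▸ hc
    · by_cases h2 : u = w
      · exact h2 ▸ hcw
      · simp [h1, h2] at hu) (by
        rw [hsum]; simp only [dotProduct_add, dotProduct_smul, smul_eq_mul]; ring)
  rw [hsum] at this
  apply hpair v hv w hw hvw ((z ⬝ᵥ v)⁻¹ * (z ⬝ᵥ w))
  rw [mul_smul, eq_inv_smul_iff₀ hz]
  rw [neg_smul, ← sub_eq_add_neg, sub_eq_zero] at this
  exact this.symm

lemma ext_reg {V : Finset E3} (hne : ∀ v ∈ V, v ≠ 0)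
    (hpair : ∀ u ∈ V, ∀ v ∈ V, u ≠ v → ∀ c : ℝ, v ≠ c • u)
    {x p z : E3} {t : ℝ} {c : E3 → ℝ}
    (hp : p ∈ Set.extremePoints ℝ (({x} + ∑ v ∈ V, segment ℝ 0 v : Set E3) ∩ {x | z ⬝ᵥ x = t}))
    (h : ZRep V x p c) {v : E3} (hv : v ∈ V) (hc : 0 < c v ∧ c v < 1) :
    (V.erase v).filter (fun w => c w = 1) ∈ Reg v (V.erase v) := by
  classical
  set S := (V.erase v).filter (fun w => c w = 1) with hS
  have h01 : ∀ w ∈ V.erase v, w ∉ S → c w = 0 := by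
    intro w hw hwS
    have hwV := Finset.mem_of_mem_erase hw
    have h1 : c w ≠ 1 := fun e => hwS (Finset.mem_filter.2 ⟨hw, e⟩)
    by_contra h0
    have hb := h.1 w hwV
    exact Finset.ne_of_mem_erase hw
      (ext_uniq hne hpair hp h hwV ⟨lt_of_le_of_ne hb.1 (Ne.symm h0), lt_of_le_of_ne hb.2 h1⟩ hv hc)
  have hS1 : ∀ w ∈ S, c w = 1 := fun w hw => (Finset.mem_filter.1 hw).2
  rw [mem_Reg]
  refine ⟨Finset.filter_subset _ _, ?_⟩
  rcases gordan v (hne v hv) (V.erase v) (fun w => if w ∈ S then w else -w) with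
    ⟨y, hy, hy2⟩ | ⟨lam, l0, ⟨w, hw, lw⟩, μ, hμ⟩
  · refine ⟨y, hy, fun w hw => ⟨fun hwS => ?_, fun hwS => ?_⟩⟩
    · simpa [hwS] using hy2 w hw
    · simpa [hwS] using hy2 w hw
  · exfalso
    set δ : E3 → ℝ := fun u => if u = v then μ else (if u ∈ S then - lam u else lam u) with hδ
    have hδsum : ∑ u ∈ V, δ u • u = 0 := by
      rw [← Finset.add_sum_erase V _ hv]
      have : ∑ u ∈ V.erase v, δ u • u = - ∑ u ∈ V.erase v, lam u • (if u ∈ S then u else -u) := by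
        rw [← Finset.sum_neg_distrib]
        apply Finset.sum_congr rfl
        intro u hu
        simp only [hδ, Finset.ne_of_mem_erase hu, if_false]
        split_ifs <;> simp
      rw [this, hμ]; simp [hδ]
    have hev := h.pert δ (fun u hu hcu => by
        by_cases huv : u = v
        · subst huv; linarith
        · have hu' := Finset.mem_erase.2 ⟨huv, hu⟩
          have : u ∉ S := fun hh => by have := hS1 u hh; linarith
          simp only [hδ, huv, this, if_false]; exact l0 u hu') (fun u hu hcu => by
        by_cases huv : u = v
        · subst huv; linarith
        · have hu' := Finset.mem_erase.2 ⟨huv, hu⟩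
          have : u ∈ S := Finset.mem_filter.2 ⟨hu', hcu⟩
          simp only [hδ, huv, this, if_false, if_true]; linarith [l0 u hu'])
    obtain ⟨τ, hr, hfr⟩ := hev.exists
    rw [hδsum] at hr
    simp only [smul_zero, add_zero] at hr
    have hwv := Finset.ne_of_mem_erase hw
    have hδw : δ w ≠ 0 := by
      simp only [hδ, hwv, if_false]; split_ifs <;> linarith
    have hwV := Finset.mem_of_mem_erase hw
    exact hwv (ext_uniq hne hpair hp hr hwV (hfr w hwV (Or.inl hδw)) hv (hfr v hv (Or.inr hc)))

lemma ZRep.dot {V : Finset E3} {x q : E3} {c : E3 → ℝ} (h : ZRep V x q c) (y : E3) :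
    y ⬝ᵥ q = y ⬝ᵥ x + ∑ w ∈ V, c w * (y ⬝ᵥ w) := by
  rw [h.2, dotProduct_add, dotProduct_sum]; simp [dotProduct_smul]

lemma ZRep.dot_erase {V : Finset E3} {x q v y : E3} {c : E3 → ℝ} (h : ZRep V x q c)
    (hy : y ⬝ᵥ v = 0) :
    y ⬝ᵥ q = y ⬝ᵥ x + ∑ w ∈ V.erase v, c w * (y ⬝ᵥ w) := by
  rw [h.dot]
  congr 1
  by_cases hv : v ∈ V
  · rw [← Finset.add_sum_erase V _ hv, hy]; simp
  · rw [Finset.erase_eq_of_notMem hv]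

lemma dot_sum_ite {U S : Finset E3} (hS : S ⊆ U) (y : E3) :
    y ⬝ᵥ (∑ w ∈ S, w) = ∑ w ∈ U, (if w ∈ S then (1 : ℝ) else 0) * (y ⬝ᵥ w) := by
  rw [dotProduct_sum]
  simp only [ite_mul, one_mul, zero_mul]
  rw [Finset.sum_ite_mem, Finset.inter_eq_right.2 hS]

lemma term_le {U S : Finset E3} {v y : E3} (hy : Pat v U S y) {c : ℝ} (hc : 0 ≤ c ∧ c ≤ 1)
    {w : E3} (hw : w ∈ U) : c * (y ⬝ᵥ w) ≤ (if w ∈ S then (1 : ℝ) else 0) * (y ⬝ᵥ w) := by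
  split_ifs with h
  · have := (hy.2 w hw).1 h
    nlinarith
  · have := (hy.2 w hw).2 h
    nlinarith

lemma face_le {V S : Finset E3} {x q v y : E3} {c : E3 → ℝ} (h : ZRep V x q c)
    (hS : S ⊆ V.erase v) (hy : Pat v (V.erase v) S y) :
    y ⬝ᵥ q ≤ y ⬝ᵥ x + y ⬝ᵥ (∑ w ∈ S, w) := by
  rw [h.dot_erase hy.1, dot_sum_ite hS]
  refine add_le_add_right (Finset.sum_le_sum fun w hw => ?_) _
  exact term_le hy (h.1 w (Finset.mem_of_mem_erase hw)) hw

lemma face_eq {V S : Finset E3} {x q v y : E3} {c : E3 → ℝ} (h : ZRep V x q c)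
    (hS : S ⊆ V.erase v) (hy : Pat v (V.erase v) S y)
    (hq : y ⬝ᵥ x + y ⬝ᵥ (∑ w ∈ S, w) ≤ y ⬝ᵥ q) :
    ∀ w ∈ V.erase v, c w = if w ∈ S then (1 : ℝ) else 0 := by
  rw [h.dot_erase hy.1, dot_sum_ite hS] at hq
  have hle := fun w (hw : w ∈ V.erase v) => term_le hy (h.1 w (Finset.mem_of_mem_erase hw)) hw
  have heq := (Finset.sum_eq_sum_iff_of_le hle).1
    (le_antisymm (Finset.sum_le_sum hle) (by linarith))
  intro w hw
  exact mul_right_cancel₀ (hy.ne hw) (heq w hw)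

lemma face_pt {V S : Finset E3} {x q v : E3} {c : E3 → ℝ} (h : ZRep V x q c) (hv : v ∈ V)
    (hS : S ⊆ V.erase v) (hc : ∀ w ∈ V.erase v, c w = if w ∈ S then (1 : ℝ) else 0) :
    q = x + ∑ w ∈ S, w + c v • v := by
  rw [h.2, ← Finset.add_sum_erase V _ hv, Finset.sum_congr rfl (fun w hw => by rw [hc w hw])]
  simp only [ite_smul, one_smul, zero_smul]
  rw [Finset.sum_ite_mem, Finset.inter_eq_right.2 hS]
  abel

lemma rep_of {V S : Finset E3} {x v : E3} {s : ℝ} (hv : v ∈ V) (hS : S ⊆ V.erase v)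
    (hs : 0 ≤ s ∧ s ≤ 1) :
    ZRep V x (x + ∑ w ∈ S, w + s • v) (fun w => if w = v then s else if w ∈ S then 1 else 0) := by
  constructor
  · intro w _
    dsimp only
    split_ifs
    · exact hs
    · norm_num
    · norm_num
  · rw [← Finset.add_sum_erase V _ hv]
    have : ∀ w ∈ V.erase v, (if w = v then s else if w ∈ S then (1 : ℝ) else 0) • w =
        if w ∈ S then w else 0 := by
      intro w hw
      rw [if_neg (Finset.ne_of_mem_erase hw)]; split_ifs <;> simp
    rw [Finset.sum_congr rfl this, Finset.sum_ite_mem, Finset.inter_eq_right.2 hS]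
    simp only [if_true]
    abel

/-- parameter along an edge -/
def coef (z x : E3) (i : (_ : E3) × Finset E3) (t : ℝ) : ℝ :=
  (t - (z ⬝ᵥ x + z ⬝ᵥ (∑ w ∈ i.2, w))) / (z ⬝ᵥ i.1)

/-- point on an edge -/
def ept (z x : E3) (t : ℝ) (i : (_ : E3) × Finset E3) : E3 :=
  x + ∑ w ∈ i.2, w + coef z x i t • i.1

/-- edges -/
def EI (V : Finset E3) : Finset ((_ : E3) × Finset E3) := V.sigma (fun v => Reg v (V.erase v))

open Classical in
/-- active edges -/
def EJ (V : Finset E3) (z x : E3) (t : ℝ) : Finset ((_ : E3) × Finset E3) :=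
  (EI V).filter (fun i => 0 < coef z x i t ∧ coef z x i t < 1)

lemma ept_injOn (V : Finset E3) (z x : E3) (t : ℝ) :
    Set.InjOn (ept z x t) (EJ V z x t : Set ((_ : E3) × Finset E3)) := by
  rintro ⟨v, S⟩ hi ⟨v', S'⟩ hi' heq
  simp only [EJ, EI, Finset.coe_filter, Finset.mem_sigma, Set.mem_ofPred_eq] at hi hi'
  obtain ⟨⟨hv, hS⟩, hc⟩ := hi
  obtain ⟨⟨hv', hS'⟩, hc'⟩ := hi'
  obtain ⟨hSs, y, hy⟩ := mem_Reg.1 hS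
  obtain ⟨hSs', y', hy'⟩ := mem_Reg.1 hS'
  have r := rep_of (x := x) hv' hSs' ⟨hc'.1.le, hc'.2.le⟩
  have heq' : x + ∑ w ∈ S, w + coef z x ⟨v, S⟩ t • v
    = x + ∑ w ∈ S', w + coef z x ⟨v', S'⟩ t • v' := heq
  rw [← heq'] at r
  have hf := face_eq r hSs hy (by
    simp only [dotProduct_add, dotProduct_smul, hy.1]; simp)
  have hvv : v' = v := by
    by_contra hne
    have := hf v' (Finset.mem_erase.2 ⟨hne, hv'⟩)
    simp only [if_true] at this
    split_ifs at this <;> linarith [hc'.1, hc'.2]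
  subst hvv
  have : S = S' := by
    ext w
    by_cases hw : w ∈ V.erase v'
    · have := hf w hw
      simp only [Finset.ne_of_mem_erase hw, if_false] at this
      by_cases h1 : w ∈ S <;> by_cases h2 : w ∈ S' <;> simp [h1, h2] at this ⊢
    · exact ⟨fun h => absurd (hSs h) hw, fun h => absurd (hSs' h) hw⟩
  rw [this]

lemma ext_eq {V : Finset E3} (hne : ∀ v ∈ V, v ≠ 0)
    (hpair : ∀ u ∈ V, ∀ v ∈ V, u ≠ v → ∀ c : ℝ, v ≠ c • u) (x z : E3) (t : ℝ)
    (ht : ∀ S ⊆ V, t ≠ z ⬝ᵥ x + z ⬝ᵥ (∑ w ∈ S, w)) :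
    Set.extremePoints ℝ (({x} + ∑ v ∈ V, segment ℝ 0 v : Set E3) ∩ {x | z ⬝ᵥ x = t}) =
      ept z x t '' (EJ V z x t : Set ((_ : E3) × Finset E3)) := by
  classical
  ext p
  constructor
  · intro hp
    obtain ⟨c, hc⟩ := (mem_zono V x p).1 hp.1.1
    have hpt : z ⬝ᵥ p = t := hp.1.2
    have : ∃ v ∈ V, 0 < c v ∧ c v < 1 := by
      by_contra hcon
      push Not at hcon
      have h01 : ∀ w ∈ V, c w = if w ∈ V.filter (fun w => c w = 1) then (1 : ℝ) else 0 := by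
        intro w hw
        simp only [Finset.mem_filter, hw, true_and]
        split_ifs with h1
        · exact h1
        · by_contra h0
          have hb := hc.1 w hw
          have := hcon w hw (lt_of_le_of_ne hb.1 (Ne.symm h0))
          exact h1 (le_antisymm hb.2 this)
      apply ht (V.filter (fun w => c w = 1)) (Finset.filter_subset _ _)
      rw [← hpt, hc.dot, dot_sum_ite (Finset.filter_subset _ _)]
      congr 1
      exact Finset.sum_congr rfl (fun w hw => by rw [← h01 w hw])
    obtain ⟨v, hv, hcv⟩ := this
    have hreg := ext_reg hne hpair hp hc hv hcv
    have hz := ext_zne hne hp hc hv hcv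
    set S := (V.erase v).filter (fun w => c w = 1) with hS
    have hSs := (mem_Reg.1 hreg).1
    have hpe := face_pt hc hv hSs (by
      intro w hw
      split_ifs with h1
      · exact (Finset.mem_filter.1 h1).2
      · have hwV := Finset.mem_of_mem_erase hw
        have h1' : c w ≠ 1 := fun e => h1 (Finset.mem_filter.2 ⟨hw, e⟩)
        by_contra h0
        have hb := hc.1 w hwV
        exact Finset.ne_of_mem_erase hw (ext_uniq hne hpair hp hc hwV
          ⟨lt_of_le_of_ne hb.1 (Ne.symm h0), lt_of_le_of_ne hb.2 h1'⟩ hv hcv))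
    have hco : coef z x ⟨v, S⟩ t = c v := by
      simp only [coef]
      rw [← hpt, hpe]
      simp only [dotProduct_add, dotProduct_smul, smul_eq_mul]
      field_simp
      ring
    refine ⟨⟨v, S⟩, ?_, ?_⟩
    · simp only [EJ, EI, Finset.coe_filter, Finset.mem_sigma, Set.mem_ofPred_eq]
      rw [hco]
      exact ⟨⟨hv, hreg⟩, hcv⟩
    · simp only [ept]
      rw [hco]; exact hpe.symm
  · rintro ⟨⟨v, S⟩, hi, rfl⟩
    simp only [EJ, EI, Finset.coe_filter, Finset.mem_sigma, Set.mem_ofPred_eq] at hi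
    obtain ⟨⟨hv, hS⟩, hc⟩ := hi
    obtain ⟨hSs, y, hy⟩ := mem_Reg.1 hS
    have hz : z ⬝ᵥ v ≠ 0 := by
      intro h0
      have := hc.1
      simp [coef, h0] at this
    have hzz : ∀ s : ℝ, z ⬝ᵥ (x + ∑ w ∈ S, w + s • v) = t → s = coef z x ⟨v, S⟩ t := by
      intro s hs
      simp only [coef]
      rw [← hs]
      simp only [dotProduct_add, dotProduct_smul, smul_eq_mul]
      field_simp
      ring
    have hM : y ⬝ᵥ ept z x t ⟨v, S⟩ = y ⬝ᵥ x + y ⬝ᵥ (∑ w ∈ S, w) := by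
      simp only [ept, dotProduct_add, dotProduct_smul, hy.1]; simp
    refine ⟨⟨(mem_zono V x _).2 ⟨_, rep_of hv hSs ⟨hc.1.le, hc.2.le⟩⟩, ?_⟩, ?_⟩
    · simp only [ept, coef, Set.mem_ofPred_eq, dotProduct_add, dotProduct_smul, smul_eq_mul]
      field_simp
      ring
    · rintro q ⟨hq, hqt⟩ r ⟨hr, hrt⟩ ⟨a, b, ha, hb, hab, he⟩
      obtain ⟨cq, hcq⟩ := (mem_zono V x q).1 hq
      obtain ⟨cr, hcr⟩ := (mem_zono V x r).1 hr
      have l1 := face_le hcq hSs hy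
      have l2 := face_le hcr hSs hy
      have hq2 : y ⬝ᵥ x + y ⬝ᵥ (∑ w ∈ S, w) ≤ y ⬝ᵥ q := by
        rw [← he] at hM
        simp only [dotProduct_add, dotProduct_smul, smul_eq_mul] at hM
        set M := y ⬝ᵥ x + y ⬝ᵥ (∑ w ∈ S, w)
        by_contra hlt
        push Not at hlt
        have hb' : b = 1 - a := by linarith
        subst hb'
        nlinarith [mul_lt_mul_of_pos_left hlt ha, mul_le_mul_of_nonneg_left l2 hb.le]
      have hqe := face_pt hcq hv hSs (face_eq hcq hSs hy hq2)
      have : z ⬝ᵥ q = t := hqt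
      rw [hqe] at this
      rw [hqe, hzz _ this]; rfl

lemma int_ind (a b β γ : ℝ) (h1 : a ≤ β) (h2 : β ≤ b) (h3 : a ≤ β + γ) (h4 : β + γ ≤ b) :
    IntervalIntegrable (fun t => if 0 < (t - β) / γ ∧ (t - β) / γ < 1 then (1 : ℝ) else 0)
      MeasureTheory.volume a b ∧
    ∫ t in a..b, (if 0 < (t - β) / γ ∧ (t - β) / γ < 1 then (1 : ℝ) else 0) = |γ| := by
  have key : ∀ l u : ℝ, a ≤ l → l ≤ u → u ≤ b →
      IntervalIntegrable ((Set.Ioo l u).indicator (fun _ => (1 : ℝ))) MeasureTheory.volume a b ∧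
      ∫ t in a..b, (Set.Ioo l u).indicator (fun _ => (1 : ℝ)) t = u - l := by
    intro l u hl hlu hu
    constructor
    · rw [intervalIntegrable_iff]
      apply MeasureTheory.IntegrableOn.indicator _ measurableSet_Ioo
      exact (intervalIntegrable_const (μ := MeasureTheory.volume) (c := (1 : ℝ)) (a := a) (b := b)).def'
    · rw [intervalIntegral.integral_of_le (by linarith),
        MeasureTheory.setIntegral_indicator measurableSet_Ioo]
      have : Set.Ioc a b ∩ Set.Ioo l u = Set.Ioo l u := by
        rw [Set.inter_eq_right]
        intro t ht
        exact ⟨by linarith [ht.1], by linarith [ht.2]⟩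
      rw [this]
      simp [hlu]
  rcases lt_trichotomy γ 0 with hγ | hγ | hγ
  · have e : (fun t => if 0 < (t - β) / γ ∧ (t - β) / γ < 1 then (1 : ℝ) else 0) =
        (Set.Ioo (β + γ) β).indicator (fun _ => (1 : ℝ)) := by
      ext t
      rw [Set.indicator_apply]
      congr 1
      rw [div_lt_one_of_neg hγ, eq_iff_iff, Set.mem_Ioo, ← neg_div_neg_eq,
        div_pos_iff_of_pos_right (neg_pos.2 hγ)]
      constructor <;> rintro ⟨p, q⟩ <;> constructor <;> linarith
    rw [e, abs_of_neg hγ]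
    have := key (β + γ) β h3 (by linarith) h2
    exact ⟨this.1, by rw [this.2]; ring⟩
  · subst hγ; simp
  · have e : (fun t => if 0 < (t - β) / γ ∧ (t - β) / γ < 1 then (1 : ℝ) else 0) =
        (Set.Ioo β (β + γ)).indicator (fun _ => (1 : ℝ)) := by
      ext t
      rw [Set.indicator_apply]
      congr 1
      rw [div_lt_one hγ, div_pos_iff_of_pos_right hγ, eq_iff_iff, Set.mem_Ioo]
      constructor <;> rintro ⟨p, q⟩ <;> constructor <;> linarith
    rw [e, abs_of_pos hγ]
    have := key β (β + γ) h1 (by linarith) h4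
    exact ⟨this.1, by rw [this.2]; ring⟩

lemma avg_formula {V : Finset E3} (hne : ∀ v ∈ V, v ≠ 0)
    (hpair : ∀ u ∈ V, ∀ v ∈ V, u ≠ v → ∀ c : ℝ, v ≠ c • u) (x z : E3)
    (hz : ∃ v ∈ V, z ⬝ᵥ v ≠ 0) (m : ℕ) (hm : ∀ v ∈ V, (Reg v (V.erase v)).card = 2 * m) :
    avgVert ({x} + ∑ v ∈ V, segment ℝ 0 v) z = 2 * m := by
  classical
  set P : Set E3 := {x} + ∑ v ∈ V, segment ℝ 0 v with hP
  set a := z ⬝ᵥ x + ∑ v ∈ V, min 0 (z ⬝ᵥ v) with ha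
  set b := z ⬝ᵥ x + ∑ v ∈ V, max 0 (z ⬝ᵥ v) with hb
  have lo : ∀ q c, ZRep V x q c → a ≤ z ⬝ᵥ q := by
    intro q c h
    rw [h.dot, ha]
    gcongr with v hv
    have := h.1 v hv
    rcases le_total 0 (z ⬝ᵥ v) with h0 | h0
    · rw [min_eq_left h0]; exact mul_nonneg this.1 h0
    · rw [min_eq_right h0]; nlinarith
  have hi : ∀ q c, ZRep V x q c → z ⬝ᵥ q ≤ b := by
    intro q c h
    rw [h.dot, hb]
    gcongr with v hv
    have := h.1 v hv
    rcases le_total 0 (z ⬝ᵥ v) with h0 | h0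
    · rw [max_eq_right h0]; nlinarith
    · rw [max_eq_left h0]; nlinarith
  have hmin : tMin P z = a := by
    apply IsLeast.csInf_eq
    constructor
    · have r : ZRep V x _ (fun v => if z ⬝ᵥ v < 0 then (1 : ℝ) else 0) :=
        ⟨fun v _ => by dsimp only; split_ifs <;> norm_num, rfl⟩
      refine ⟨_, (mem_zono V x _).2 ⟨_, r⟩, ?_⟩
      change z ⬝ᵥ _ = _
      rw [r.dot, ha]
      congr 1
      apply Finset.sum_congr rfl
      intro v _
      split_ifs with h
      · rw [min_eq_right h.le]; ring
      · rw [min_eq_left (not_lt.1 h)]; ring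
    · rintro _ ⟨q, hq, rfl⟩
      obtain ⟨c, hc⟩ := (mem_zono V x q).1 hq
      exact lo q c hc
  have hmax : tMax P z = b := by
    apply IsGreatest.csSup_eq
    constructor
    · have r : ZRep V x _ (fun v => if z ⬝ᵥ v < 0 then (0 : ℝ) else 1) :=
        ⟨fun v _ => by dsimp only; split_ifs <;> norm_num, rfl⟩
      refine ⟨_, (mem_zono V x _).2 ⟨_, r⟩, ?_⟩
      change z ⬝ᵥ _ = _
      rw [r.dot, hb]
      congr 1
      apply Finset.sum_congr rfl
      intro v _
      split_ifs with h
      · rw [max_eq_left h.le]; ring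
      · rw [max_eq_right (not_lt.1 h)]; ring
    · rintro _ ⟨q, hq, rfl⟩
      obtain ⟨c, hc⟩ := (mem_zono V x q).1 hq
      exact hi q c hc
  have hba : b - a = ∑ v ∈ V, |z ⬝ᵥ v| := by
    rw [ha, hb, add_sub_add_left_eq_sub, ← Finset.sum_sub_distrib]
    apply Finset.sum_congr rfl
    intro v _
    rcases le_total 0 (z ⬝ᵥ v) with h0 | h0
    · rw [max_eq_right h0, min_eq_left h0, abs_of_nonneg h0]; ring
    · rw [max_eq_left h0, min_eq_right h0, abs_of_nonpos h0]; ring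
  have hpos : 0 < b - a := by
    rw [hba]
    obtain ⟨v, hv, h0⟩ := hz
    exact Finset.sum_pos' (fun _ _ => abs_nonneg _) ⟨v, hv, abs_pos.2 h0⟩
  unfold avgVert
  rw [hmin, hmax]
  set bad : Set ℝ := ((V.powerset.image (fun S => z ⬝ᵥ x + z ⬝ᵥ (∑ w ∈ S, w)) : Finset ℝ) : Set ℝ)
    with hbad
  have hnv : ∀ t, t ∉ bad → ((nVert (P ∩ {x | dotp z x = t}) : ℕ) : ℝ) =
      ∑ i ∈ EI V, if 0 < coef z x i t ∧ coef z x i t < 1 then (1 : ℝ) else 0 := by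
    intro t ht
    have e := ext_eq hne hpair x z t (by
      intro S hS he
      apply ht
      simp only [hbad, Finset.coe_image, Set.mem_image, Finset.mem_coe, Finset.mem_powerset]
      exact ⟨S, hS, he.symm⟩)
    have e' : nVert (P ∩ {x | dotp z x = t}) = (EJ V z x t).card := by
      unfold nVert
      change (Set.extremePoints ℝ (P ∩ {x | z ⬝ᵥ x = t})).ncard = _
      rw [e, Set.InjOn.ncard_image (ept_injOn V z x t), Set.ncard_coe_finset]
    rw [e', EJ, Finset.card_filter]
    push_cast
    rfl
  have hint : ∫ t in a..b, ((nVert (P ∩ {x | dotp z x = t}) : ℕ) : ℝ) =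
      ∫ t in a..b, ∑ i ∈ EI V, if 0 < coef z x i t ∧ coef z x i t < 1 then (1 : ℝ) else 0 := by
    apply intervalIntegral.integral_congr_ae
    have : ∀ᵐ t ∂(MeasureTheory.volume : MeasureTheory.Measure ℝ), t ∉ bad := by
      rw [← MeasureTheory.measure_eq_zero_iff_ae_notMem]
      exact (Finset.finite_toSet _).measure_zero _
    filter_upwards [this] with t ht _
    exact hnv t ht
  have hI : ∀ i ∈ EI V,
      IntervalIntegrable (fun t => if 0 < coef z x i t ∧ coef z x i t < 1 then (1 : ℝ) else 0)
        MeasureTheory.volume a b ∧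
      ∫ t in a..b, (if 0 < coef z x i t ∧ coef z x i t < 1 then (1 : ℝ) else 0) = |z ⬝ᵥ i.1| := fun i hi' => int_ind a b (z ⬝ᵥ x + z ⬝ᵥ (∑ w ∈ i.2, w)) (z ⬝ᵥ i.1)
    (by
      obtain ⟨hv, hS⟩ := Finset.mem_sigma.1 hi'
      have r := rep_of (x := x) hv (mem_Reg.1 hS).1 (s := 0) (by norm_num)
      simpa [dotProduct_add] using lo _ _ r)
    (by
      obtain ⟨hv, hS⟩ := Finset.mem_sigma.1 hi'
      have r := rep_of (x := x) hv (mem_Reg.1 hS).1 (s := 0) (by norm_num)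
      simpa [dotProduct_add] using hi _ _ r)
    (by
      obtain ⟨hv, hS⟩ := Finset.mem_sigma.1 hi'
      have r := rep_of (x := x) hv (mem_Reg.1 hS).1 (s := 1) (by norm_num)
      simpa [dotProduct_add] using lo _ _ r)
    (by
      obtain ⟨hv, hS⟩ := Finset.mem_sigma.1 hi'
      have r := rep_of (x := x) hv (mem_Reg.1 hS).1 (s := 1) (by norm_num)
      simpa [dotProduct_add] using hi _ _ r)
  rw [hint, intervalIntegral.integral_finsetSum (fun i hi' => (hI i hi').1),
    Finset.sum_congr rfl (fun i hi' => (hI i hi').2), EI, Finset.sum_sigma]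
  simp only [Finset.sum_const, nsmul_eq_mul]
  rw [Finset.sum_congr rfl (fun v hv => by rw [hm v hv]), ← Finset.mul_sum, ← hba]
  field_simp
  push_cast
  ring

lemma cross_ne {v f : E3} (hv : v ≠ 0) (h : ∀ c : ℝ, f ≠ c • v) : v ⨯₃ f ≠ 0 := by
  rw [crossProduct_ne_zero_iff_linearIndependent, LinearIndependent.pair_iff' hv]
  exact fun a e => h a e.symm

lemma triple_ne {v f g : E3} (hn : v ⨯₃ f ≠ 0)
    (hg : g ∉ Submodule.span ℝ ({v, f} : Set E3)) : (v ⨯₃ f) ⬝ᵥ g ≠ 0 := by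
  intro h0
  apply hg
  set n := v ⨯₃ f with hnd
  have hnn : n ⬝ᵥ n ≠ 0 := fun e => hn (dotProduct_self_eq_zero.1 e)
  have hvm : v ∈ Submodule.span ℝ ({v, f} : Set E3) := Submodule.subset_span (by simp)
  have hfm : f ∈ Submodule.span ℝ ({v, f} : Set E3) := Submodule.subset_span (by simp)
  have a1 : n ⨯₃ v ∈ Submodule.span ℝ ({v, f} : Set E3) := by
    rw [hnd, cross_cross_eq_smul_sub_smul]
    exact Submodule.sub_mem _ (Submodule.smul_mem _ _ hfm) (Submodule.smul_mem _ _ hvm)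
  have a2 : n ⨯₃ f ∈ Submodule.span ℝ ({v, f} : Set E3) := by
    rw [hnd, cross_cross_eq_smul_sub_smul]
    exact Submodule.sub_mem _ (Submodule.smul_mem _ _ hfm) (Submodule.smul_mem _ _ hvm)
  have b1 : n ⨯₃ (g ⨯₃ n) = (n ⬝ᵥ n) • g := by
    rw [cross_cross_eq_smul_sub_smul', dotProduct_comm g n, h0]; simp
  have b2 : g ⨯₃ n = (g ⬝ᵥ f) • v - (v ⬝ᵥ g) • f := by
    rw [hnd, cross_cross_eq_smul_sub_smul']
  rw [b2] at b1
  have b3 : (n ⬝ᵥ n) • g ∈ Submodule.span ℝ ({v, f} : Set E3) := by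
    rw [← b1, map_sub, map_smul, map_smul]
    exact Submodule.sub_mem _ (Submodule.smul_mem _ _ a1) (Submodule.smul_mem _ _ a2)
  exact (Submodule.smul_mem_iff _ hnn).1 b3

lemma finrank_pair {v f : E3} (hn : v ⨯₃ f ≠ 0) :
    Module.finrank ℝ (Submodule.span ℝ ({v, f} : Set E3)) = 2 := by
  rw [crossProduct_ne_zero_iff_linearIndependent] at hn
  have := finrank_span_eq_card hn
  rw [Matrix.range_cons_cons_empty] at this
  simpa using this

lemma finrank_insert_three {W : Set E3} {u : E3}
    (h2 : Module.finrank ℝ (Submodule.span ℝ W) = 2) (hu : u ∉ Submodule.span ℝ W) :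
    Module.finrank ℝ (Submodule.span ℝ (insert u W)) = 3 := by
  have hlt : Submodule.span ℝ W < Submodule.span ℝ (insert u W) := by
    refine lt_of_le_of_ne (Submodule.span_mono (Set.subset_insert _ _)) (fun e => hu ?_)
    rw [e]; exact Submodule.subset_span (Set.mem_insert _ _)
  have h1 := Submodule.finrank_lt_finrank_of_lt hlt
  have h3 := Submodule.finrank_le (Submodule.span ℝ (insert u W))
  simp at h3
  omega

/-- Example 6.2. Let `V ⊂ ℝ³` consist of `n = ℓk` pairwise linearly
independent nonzero vectors split into `ℓ` groups of `k` coplanar vectors each, in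
otherwise general position. Then the zonotope `P` generated by `V` satisfies
`A(P,z) = 2(n - k + 1)` for every nonzero `z`, and `deg v = 1 + (ℓ-1)k` for every
`v ∈ V` in the hypergraph `ℱ`. -/
theorem example_groups_avgVert (k ℓ : ℕ) (hk : 2 ≤ k) (hℓ : 2 ≤ ℓ)
    (V : Finset (Fin 3 → ℝ)) (Vg : Fin ℓ → Finset (Fin 3 → ℝ))
    (hne : ∀ v ∈ V, v ≠ 0)
    (hpair : ∀ u ∈ V, ∀ v ∈ V, u ≠ v → ∀ c : ℝ, v ≠ c • u)
    (hcardV : V.card = ℓ * k)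
    (hcard : ∀ j, (Vg j).card = k)
    (hdisj : ∀ i j : Fin ℓ, i ≠ j → Disjoint (Vg i) (Vg j))
    (hunion : ∀ v, v ∈ V ↔ ∃ j, v ∈ Vg j)
    (hplane : ∀ j, Module.finrank ℝ
      (Submodule.span ℝ ((Vg j : Set (Fin 3 → ℝ)))) = 2)
    (houtside : ∀ j, ∀ v ∈ V, v ∉ Vg j →
      v ∉ Submodule.span ℝ ((Vg j : Set (Fin 3 → ℝ))))
    (hgen : ∀ i j : Fin ℓ, i ≠ j → ∀ u ∈ Vg i, ∀ v ∈ Vg j, ∀ w ∈ V,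
      (w : Fin 3 → ℝ) ∈ Submodule.span ℝ ({u, v} : Set (Fin 3 → ℝ)) →
      w = u ∨ w = v)
    (x : Fin 3 → ℝ) (P : Set (Fin 3 → ℝ))
    (hP : P = {x} + ∑ v ∈ V, segment ℝ 0 v) :
    (∀ z : Fin 3 → ℝ, z ≠ 0 → avgVert P z = 2 * ((ℓ * k : ℝ) - k + 1)) ∧
    (∀ v ∈ V, degF V v = 1 + (ℓ - 1) * k) := by
  classical
  have hsub : ∀ j, Vg j ⊆ V := fun j v hv => (hunion v).2 ⟨j, hv⟩
  have hcross : ∀ u ∈ V, ∀ v ∈ V, u ≠ v → u ⨯₃ v ≠ 0 := fun u hu v hv h =>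
    cross_ne (hne u hu) (hpair u hu v hv h)
  have hcardW : ∀ j, (V \ Vg j).card = (ℓ - 1) * k := by
    intro j
    rw [Finset.card_sdiff_of_subset (hsub j), hcardV, hcard, Nat.sub_mul, one_mul]
  -- general position, second group index hidden
  have hgen' : ∀ j, ∀ v ∈ Vg j, ∀ w ∈ V, w ∉ Vg j → ∀ g ∈ V, g ≠ v → g ≠ w →
      g ∉ Submodule.span ℝ ({v, w} : Set (Fin 3 → ℝ)) := by
    intro j v hv w hw hwj g hg h1 h2 hmem
    obtain ⟨i, hi⟩ := (hunion w).1 hw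
    have hji : j ≠ i := fun e => hwj (e ▸ hi)
    rcases hgen j i hji v hv w hi g hg hmem with h | h
    · exact h1 h
    · exact h2 h
  have hspan : ∀ j, ∀ v ∈ Vg j, ∀ u ∈ Vg j, v ≠ u →
      Submodule.span ℝ ({v, u} : Set (Fin 3 → ℝ)) = Submodule.span ℝ (Vg j : Set (Fin 3 → ℝ)) := by
    intro j v hv u hu hvu
    apply Submodule.eq_of_le_of_finrank_eq
    · apply Submodule.span_mono
      intro w hw
      rcases hw with rfl | rfl
      · exact hv
      · exact hu
    · rw [hplane, finrank_pair (hcross v (hsub j hv) u (hsub j hu) hvu)]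
  have hother : ∀ j, ∀ v ∈ Vg j, ∃ u ∈ Vg j, u ≠ v := by
    intro j v hv
    have : 1 < (Vg j).card := by rw [hcard]; omega
    exact Finset.exists_mem_ne this v
  have hreg : ∀ v ∈ V, (Reg v (V.erase v)).card = 2 * (1 + (ℓ - 1) * k) := by
    intro v hv
    obtain ⟨j, hj⟩ := (hunion v).1 hv
    obtain ⟨u, hu, huv⟩ := hother j v hj
    have hdec : V.erase v = ((Vg j).erase v).erase u ∪ insert u (V \ Vg j) := by
      ext w
      simp only [Finset.mem_erase, Finset.mem_union, Finset.mem_insert, Finset.mem_sdiff]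
      constructor
      · rintro ⟨h1, h2⟩
        by_cases h3 : w ∈ Vg j
        · by_cases h4 : w = u
          · exact Or.inr (Or.inl h4)
          · exact Or.inl ⟨h4, h1, h3⟩
        · exact Or.inr (Or.inr ⟨h2, h3⟩)
      · rintro (⟨h1, h2, h3⟩ | rfl | ⟨h1, h2⟩)
        · exact ⟨h2, hsub j h3⟩
        · exact ⟨huv, hsub j hu⟩
        · exact ⟨fun e => h2 (e ▸ hj), h1⟩
    rw [hdec, card_Reg_par v u _ _ (Finset.mem_insert_self _ _), card_Reg_indep]
    · rw [Finset.card_insert_of_notMem (by simp [hu]), hcardW]; ring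
    · intro f hf
      rcases Finset.mem_insert.1 hf with rfl | hf
      · exact hcross v hv f (hsub j hu) huv.symm
      · rw [Finset.mem_sdiff] at hf
        exact hcross v hv f hf.1 (fun e => hf.2 (e ▸ hj))
    · have hA : ∀ f ∈ V, f ∉ Vg j → ∀ g ∈ V, g ≠ v → g ≠ f → (v ⨯₃ f) ⬝ᵥ g ≠ 0 := by
        intro f hf hfj g hg hgv hgf
        exact triple_ne (hcross v hv f hf (fun e => hfj (e ▸ hj))) (hgen' j v hj f hf hfj g hg hgv hgf)
      intro f hf g hg hfg
      rcases Finset.mem_insert.1 hf with rfl | hf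
      · rcases Finset.mem_insert.1 hg with rfl | hg
        · exact absurd rfl hfg
        · rw [Finset.mem_sdiff] at hg
          have h1 := hA g hg.1 hg.2 f (hsub j hu) huv hfg
          have h2 : (v ⨯₃ f) ⬝ᵥ g = - ((v ⨯₃ g) ⬝ᵥ f) := by
            rw [dotProduct_comm _ g, dotProduct_comm _ f, triple_product_permutation g v f,
              triple_product_permutation v f g, ← cross_anticomm v g, dotProduct_neg]
          rw [h2]; exact neg_ne_zero.2 h1
      · rw [Finset.mem_sdiff] at hf
        rcases Finset.mem_insert.1 hg with hgu | hg
        · rw [hgu]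
          exact hA f hf.1 hf.2 u (hsub j hu) huv (hgu ▸ hfg.symm)
        · rw [Finset.mem_sdiff] at hg
          exact hA f hf.1 hf.2 g hg.1 (fun e => hg.2 (e ▸ hj)) hfg.symm
    · exact Finset.insert_nonempty _ _
    · rw [Finset.disjoint_left]
      intro w hw hw'
      simp only [Finset.mem_erase] at hw
      simp only [Finset.mem_insert, Finset.mem_sdiff] at hw'
      rcases hw' with h | h
      · exact hw.1 h
      · exact h.2 hw.2.2
    · intro w hw
      simp only [Finset.mem_erase] at hw
      have hm : w ∈ Submodule.span ℝ ({u, v} : Set (Fin 3 → ℝ)) := by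
        rw [hspan j u hu v hj huv]
        exact Submodule.subset_span hw.2.2
      obtain ⟨α, β, he⟩ := Submodule.mem_span_pair.1 hm
      refine ⟨α, β, ?_, he.symm⟩
      rintro rfl
      exact hpair v hv w (hsub j hw.2.2) (fun e => hw.2.1 e.symm) β (by rw [← he]; simp)
  constructor
  · intro z hz
    have hz' : ∃ v ∈ V, z ⬝ᵥ v ≠ 0 := by
      by_contra hcon
      push Not at hcon
      have hex : ∀ j, ∃ v, v ∈ Vg j := fun j => by
        have : 0 < (Vg j).card := by rw [hcard]; omega
        exact Finset.card_pos.1 this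
      obtain ⟨v, hv⟩ := hex ⟨0, by omega⟩
      obtain ⟨w, hw⟩ := hex ⟨1, by omega⟩
      obtain ⟨u, hu, huv⟩ := hother _ v hv
      have hvV := hsub _ hv
      have huV := hsub _ hu
      have hwV := hsub _ hw
      have hwn : w ∉ Vg ⟨0, by omega⟩ := fun h =>
        Finset.disjoint_left.1 (hdisj ⟨0, by omega⟩ ⟨1, by omega⟩ (by simp)) h hw
      have hc := hcross v hvV u huV huv.symm
      obtain ⟨s, hs⟩ := perp_eq v u z hc (hcon v hvV) (hcon u huV)
      have h1 := triple_ne (g := w) hc (by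
        rw [hspan _ v hv u hu huv.symm]; exact houtside _ w hwV hwn)
      have h2 := hcon w hwV
      rw [hs, smul_dotProduct, smul_eq_mul] at h2
      rcases mul_eq_zero.1 h2 with h | h
      · exact hz (by rw [hs, h]; simp)
      · exact h1 h
    rw [hP, avg_formula hne hpair x z hz' _ hreg]
    have : ((ℓ - 1 : ℕ) : ℝ) = (ℓ : ℝ) - 1 := by
      rw [Nat.cast_sub (by omega)]; simp
    push_cast
    rw [this]
    ring
  · intro v hv
    obtain ⟨j, hj⟩ := (hunion v).1 hv
    have hset : {W : Finset (Fin 3 → ℝ) | IsHEdge V W ∧ v ∈ W} =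
        ((insert (Vg j) ((V \ Vg j).image (fun w => ({v, w} : Finset (Fin 3 → ℝ)))) :
          Finset (Finset (Fin 3 → ℝ))) : Set (Finset (Fin 3 → ℝ))) := by
      ext W
      simp only [Set.mem_ofPred_eq, Finset.coe_insert, Finset.coe_image, Set.mem_insert_iff,
        Set.mem_image, Finset.mem_coe, Finset.mem_sdiff]
      constructor
      · rintro ⟨⟨hWV, hW2, hWm⟩, hvW⟩
        by_cases hWj : W ⊆ Vg j
        · left
          apply Finset.Subset.antisymm hWj
          intro u hu
          by_contra huW
          have h3 := hWm u (hsub j hu) huW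
          have hle : Submodule.span ℝ (insert u (W : Set (Fin 3 → ℝ))) ≤
              Submodule.span ℝ (Vg j : Set (Fin 3 → ℝ)) := by
            apply Submodule.span_mono
            exact Set.insert_subset hu (Finset.coe_subset.2 hWj)
          have := Submodule.finrank_mono hle
          rw [h3, hplane] at this
          omega
        · right
          obtain ⟨w, hwW, hwj⟩ := Finset.not_subset.1 hWj
          have hvw : v ≠ w := fun e => hwj (e ▸ hj)
          refine ⟨w, ⟨hWV hwW, hwj⟩, ?_⟩
          have heq : Submodule.span ℝ ({v, w} : Set (Fin 3 → ℝ)) =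
              Submodule.span ℝ (W : Set (Fin 3 → ℝ)) := by
            apply Submodule.eq_of_le_of_finrank_eq
            · apply Submodule.span_mono
              intro a ha
              rcases ha with rfl | rfl
              · exact hvW
              · exact hwW
            · rw [hW2, finrank_pair (hcross v hv w (hWV hwW) hvw)]
          ext u
          simp only [Finset.mem_insert, Finset.mem_singleton]
          constructor
          · rintro (rfl | rfl)
            · exact hvW
            · exact hwW
          · intro hu
            by_contra hcon
            push Not at hcon
            apply hgen' j v hj w (hWV hwW) hwj u (hWV hu) hcon.1 hcon.2
            rw [heq]; exact Submodule.subset_span hu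
      · rintro (rfl | ⟨w, ⟨hw, hwj⟩, rfl⟩)
        · exact ⟨⟨hsub j, hplane j, fun u hu huj =>
            finrank_insert_three (hplane j) (houtside j u hu huj)⟩, hj⟩
        · have hvw : v ≠ w := fun e => hwj (e ▸ hj)
          have h2 : Module.finrank ℝ (Submodule.span ℝ
              ((({v, w} : Finset (Fin 3 → ℝ))) : Set (Fin 3 → ℝ))) = 2 := by
            rw [Finset.coe_pair]; exact finrank_pair (hcross v hv w hw hvw)
          refine ⟨⟨?_, h2, ?_⟩, by simp⟩
          · intro a ha
            rcases Finset.mem_insert.1 ha with rfl | ha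
            · exact hv
            · rw [Finset.mem_singleton.1 ha]; exact hw
          · intro u hu hun
            apply finrank_insert_three h2
            rw [Finset.coe_pair]
            simp only [Finset.mem_insert, Finset.mem_singleton, not_or] at hun
            exact hgen' j v hj w hw hwj u hu hun.1 hun.2
    unfold degF
    rw [hset, Set.ncard_coe_finset, Finset.card_insert_of_notMem, Finset.card_image_of_injOn, hcardW]
    · ring
    · intro w hw w' hw' he
      simp only [Finset.coe_sdiff, Set.mem_sdiff, Finset.mem_coe] at hw hw'
      have : w ∈ ({v, w'} : Finset (Fin 3 → ℝ)) := by
        rw [← show ({v, w} : Finset (Fin 3 → ℝ)) = {v, w'} from he]; simp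
      simp only [Finset.mem_insert, Finset.mem_singleton] at this
      rcases this with h | h
      · exact absurd (h ▸ hj) hw.2
      · exact h
    · intro h
      obtain ⟨w, hw, he⟩ := Finset.mem_image.1 h
      rw [Finset.mem_sdiff] at hw
      apply hw.2
      rw [← he]; simp
end
end
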